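/- Let X be a Cantor space and K a nonempty set of Borel probability measures on X. Then there exists a minimal homeomorphism g of X whose set of g-invariant Borel probability measures is exactly K if and only if K is a dynamical simplex. -/

import Mathlib

/-!
Invariant measures of minimal homeomorphisms of a Cantor space are characterised as dynamical
simplices. LC below stands for integer-valued and locally constant, and `f` is said to be
cohomologous to a nonnegative function for `g` if `0 ≤ f + h ∘ g - h` for some LC function `h`.

**From a minimal homeomorphism `g` to a dynamical simplex.** Compactness and convexity hold for any
homeomorphism; minimality makes invariant measures fully supported and atomless. For
goodness (`good_inv`), let `μ A < μ B` for every invariant `μ`. By compactness of the space of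
measures, the Birkhoff sums of `1_B - 1_A` over some window of length `N` are positive everywhere
(`exists_birkhoff_pos`). Matching greedily, at stage `n`, the unmatched points `x ∈ A` with the
unmatched points `g^n x ∈ B` therefore exhausts `A` after `N` stages, and the matched part of `B`
is the required set. For approximate divisibility, visits to `A` are counted modulo `n` until the
first visit to a set `D` of very small measure; this cuts `A` into `n` clopen classes of almost
equal measure (`exists_almost_division`), and goodness is used to trim one of them slightly.

**From a dynamical simplex `K` to a minimal homeomorphism.** A back-and-forth argument shows that
two LC labellings whose fibres have the same `K`-measures are conjugate by a homeomorphism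
preserving all of `K` (`DynamicalSimplex.homogeneous`, localised in
`DynamicalSimplex.homogeneousOn`). The core is `DynamicalSimplex.solve`: an LC function `F` living
on a clopen set `B`, with positive integral for every `μ ∈ K`, becomes cohomologous to a
nonnegative function for a suitable `K`-preserving homeomorphism supported in `B`. Almost all of
`B` is divided into cycles of a large length `κ` along which `F` is constant. In cycles where
`F < 0` the debt is concentrated in few points owing `κ` each; in cycles where `F > 0` the wealth
is concentrated in few points owning `κ` each. Positivity of the integrals says that the wealthy set
is larger than the debt set, so by goodness each debt can be paid by a wealthy point. Each of these
operations is an instance of passing to an induced map (`DynamicalSimplex.reduction`).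

Through induced maps the same holds for modifications, inside a clopen set `B` met by
all orbits, of a given homeomorphism (`DynamicalSimplex.modify`). Running through the
countably many LC functions with positive integrals, with the sets `B` shrinking fast enough
(`DynamicalSimplex.step`), gives a limit homeomorphism `g` preserving `K` for which *every* LC
function with positive integrals is cohomologous to a nonnegative one
(`DynamicalSimplex.exists_limit`). Applied to `M • 1_U - 1` with `M` large, this shows that every
orbit meets `U`, hence minimality. An invariant measure outside `K` would, by Hahn–Banach and
rounding (`exists_separating`), have a negative integral against an LC function whose integrals are
positive on `K`, which is impossible for a function cohomologous to a nonnegative one.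
-/

open MeasureTheory

namespace DynSimplex

variable {X : Type*} [TopologicalSpace X] [MeasurableSpace X] [OpensMeasurableSpace X]

/-- `g` preserves the probability measure `μ`, i.e. `g_*μ = μ`. -/
def Preserves (g : X ≃ₜ X) (μ : ProbabilityMeasure X) : Prop :=
  (μ : Measure X).map g = (μ : Measure X)

/-- A homeomorphism is minimal if all of its (two-sided) orbits are dense. -/
def IsMinimal (g : X ≃ₜ X) : Prop :=
  ∀ x : X, Dense (Set.range fun n : ℤ => (g.toEquiv ^ n) x)

/-- A set of probability measures is good if for all clopen `A`, `B` with `μ A < μ B` for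
all `μ ∈ K`, there is a clopen `C ⊆ B` with `μ C = μ A` for all `μ ∈ K`. -/
def Good (K : Set (ProbabilityMeasure X)) : Prop :=
  ∀ A B : Set X, IsClopen A → IsClopen B → (∀ μ ∈ K, μ A < μ B) →
    ∃ C : Set X, IsClopen C ∧ C ⊆ B ∧ ∀ μ ∈ K, μ C = μ A

/-- Approximate divisibility of a set of probability measures. -/
def ApproximatelyDivisible (K : Set (ProbabilityMeasure X)) : Prop :=
  ∀ A : Set X, IsClopen A → ∀ n : ℕ, 1 ≤ n → ∀ ε : ℝ, 0 < ε →
    ∃ B : Set X, IsClopen B ∧ B ⊆ A ∧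
      ∀ μ ∈ K, (μ A : ℝ) - ε ≤ (n : ℝ) * (μ B : ℝ) ∧ (n : ℝ) * (μ B : ℝ) ≤ (μ A : ℝ)

/-- A probability measure has full support if every nonempty open set has positive measure. -/
def FullSupport (μ : ProbabilityMeasure X) : Prop :=
  ∀ U : Set X, IsOpen U → U.Nonempty → 0 < μ U

/-- A probability measure is atomless if all singletons are null. -/
def Atomless (μ : ProbabilityMeasure X) : Prop :=
  ∀ x : X, μ {x} = 0

/-- Convexity of a set of probability measures (as a subset of the `ℝ≥0`-module of
finite measures). -/
def ProbConvex (K : Set (ProbabilityMeasure X)) : Prop :=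
  Convex NNReal (ProbabilityMeasure.toFiniteMeasure '' K)

/-- The set of extreme points of a set of probability measures. -/
def ProbExtremePoints (K : Set (ProbabilityMeasure X)) : Set (ProbabilityMeasure X) :=
  ProbabilityMeasure.toFiniteMeasure ⁻¹'
    (Set.extremePoints NNReal (ProbabilityMeasure.toFiniteMeasure '' K))

/-- A dynamical simplex: a nonempty compact convex set of atomless, fully supported
probability measures which is good and approximately divisible. -/
def DynamicalSimplex (K : Set (ProbabilityMeasure X)) : Prop :=
  K.Nonempty ∧ IsCompact K ∧ ProbConvex K ∧
    (∀ μ ∈ K, Atomless μ ∧ FullSupport μ) ∧ Good K ∧ ApproximatelyDivisible K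

/-- Membership in the full group of `g`. -/
def InFullGroup (g h : X ≃ₜ X) : Prop :=
  ∀ x : X, ∃ n : ℤ, h x = (g.toEquiv ^ n) x

/-- Membership in the topological full group of `g`: `h` is given piecewise by powers of `g`
on a finite clopen partition of `X`. -/
def InTopologicalFullGroup (g h : X ≃ₜ X) : Prop :=
  ∃ (k : ℕ) (A : Fin k → Set X) (n : Fin k → ℤ),
    (∀ i, IsClopen (A i)) ∧ (∀ x : X, ∃! i, x ∈ A i) ∧
    ∀ i, ∀ x ∈ A i, h x = (g.toEquiv ^ (n i)) x

/-- `g` preserves every measure in `K` (i.e. `g` belongs to the group `G`). -/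
def PreservesAll (K : Set (ProbabilityMeasure X)) (g : X ≃ₜ X) : Prop :=
  ∀ μ ∈ K, Preserves g μ

/-- `g` is `K`-saturated: any two `K`-equivalent clopen sets are mapped one to the other by
an element of the topological full group of `g`. -/
def KSaturated (K : Set (ProbabilityMeasure X)) (g : X ≃ₜ X) : Prop :=
  ∀ U V : Set X, IsClopen U → IsClopen V → (∀ μ ∈ K, μ U = μ V) →
    ∃ h : X ≃ₜ X, InTopologicalFullGroup g h ∧ h '' U = V

/-- The topology of uniform convergence on the homeomorphism group of a compact space
(the compact-open topology, induced from `C(X, X)`). -/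
instance : TopologicalSpace (X ≃ₜ X) :=
  TopologicalSpace.induced (fun h : X ≃ₜ X => (h : C(X, X))) inferInstance

/-- A KR-partition for `K`: a finite family of columns, each column being a finite sequence of
clopen sets which are all `K`-equivalent, the atoms of all columns forming a partition of `X`. -/
structure KRPartition (X : Type*) [TopologicalSpace X] [MeasurableSpace X]
    (K : Set (ProbabilityMeasure X)) where
  numCols : ℕ
  height : Fin numCols → ℕ
  atom : (i : Fin numCols) → Fin (height i + 1) → Set X
  clopen : ∀ i j, IsClopen (atom i j)
  equivK : ∀ i j j', ∀ μ ∈ K, μ (atom i j) = μ (atom i j')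
  partition : ∀ x : X, ∃! p : (i : Fin numCols) × Fin (height i + 1), x ∈ atom p.1 p.2

/-- The base of a KR-partition: the union of the first atoms of the columns. -/
def KRPartition.base {K : Set (ProbabilityMeasure X)} (T : KRPartition X K) : Set X :=
  ⋃ i, T.atom i 0

/-- The top of a KR-partition: the union of the last atoms of the columns. -/
def KRPartition.top {K : Set (ProbabilityMeasure X)} (T : KRPartition X K) : Set X :=
  ⋃ i, T.atom i (Fin.last _)

/-- `S` refines `T`: the base (resp. top) of `S` is contained in the base (resp. top) of `T`,
and every column of `S` is obtained by cutting and stacking columns of `T`. -/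
def KRPartition.Refines {K : Set (ProbabilityMeasure X)} (S T : KRPartition X K) : Prop :=
  S.base ⊆ T.base ∧ S.top ⊆ T.top ∧
  ∀ c : Fin S.numCols, ∃ (m : ℕ) (idx : Fin (m + 1) → Fin T.numCols)
    (piece : (k : Fin (m + 1)) → Fin (T.height (idx k) + 1) → Set X),
    (∀ k j, piece k j ⊆ T.atom (idx k) j) ∧
    (S.height c + 1 = ∑ k : Fin (m + 1), (T.height (idx k) + 1)) ∧
    ∀ (k : Fin (m + 1)) (j : Fin (T.height (idx k) + 1))
      (hlt : (∑ l ∈ Finset.Iio k, (T.height (idx l) + 1)) + (j : ℕ) < S.height c + 1),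
      S.atom c ⟨(∑ l ∈ Finset.Iio k, (T.height (idx l) + 1)) + (j : ℕ), hlt⟩ = piece k j

/-- A KR-partition is compatible with a clopen set `U` if `U` is a union of its atoms,
equivalently every atom is either contained in `U` or disjoint from it. -/
def KRPartition.Compatible {K : Set (ProbabilityMeasure X)} (S : KRPartition X K)
    (U : Set X) : Prop :=
  ∀ i j, S.atom i j ⊆ U ∨ Disjoint (S.atom i j) U

end DynSimplex

open MeasureTheory Filter Topology

set_option linter.unusedSectionVars false

/-! ### Locally constant functions, clopen sets and measures -/

namespace DynSimplex

section Basics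

variable {X : Type*} [TopologicalSpace X]

lemma isClopen_preimage_of_lc {ι : Type*} {f : X → ι} (hf : IsLocallyConstant f) (s : Set ι) :
    IsClopen (f ⁻¹' s) :=
  ⟨⟨hf sᶜ⟩, hf s⟩

lemma isClopen_setOf_lc {f : X → Prop} (hf : IsLocallyConstant f) : IsClopen {x | f x} := by
  have := isClopen_preimage_of_lc hf {True}
  convert this using 1
  ext x; simp

lemma lc_mem {A : Set X} (hA : IsClopen A) : IsLocallyConstant (fun x => x ∈ A) := by
  rw [IsLocallyConstant.iff_eventually_eq]
  intro x
  by_cases hx : x ∈ A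
  · filter_upwards [hA.isOpen.mem_nhds hx] with y hy
    simp [hx, hy]
  · filter_upwards [hA.compl.isOpen.mem_nhds hx] with y hy
    simp only [eq_iff_iff]
    exact ⟨fun h => absurd h hy, fun h => absurd h hx⟩

lemma lc_dep {ι Y : Type*} {c : X → ι} (hc : IsLocallyConstant c) {f : ι → X → Y}
    (hf : ∀ i, IsLocallyConstant (f i)) : IsLocallyConstant (fun x => f (c x) x) := by
  rw [IsLocallyConstant.iff_eventually_eq]
  intro x
  filter_upwards [hc.eventually_eq x, (hf (c x)).eventually_eq x] with y h1 h2
  rw [h1, h2]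

lemma continuous_dep {ι Y : Type*} [TopologicalSpace Y] {c : X → ι} (hc : IsLocallyConstant c)
    {f : ι → X → Y} (hf : ∀ i, Continuous (f i)) : Continuous (fun x => f (c x) x) := by
  rw [continuous_iff_continuousAt]
  intro x
  have h := (hf (c x)).continuousAt (x := x)
  refine h.congr ?_
  filter_upwards [hc.eventually_eq x] with y h1
  rw [h1]

lemma lc_ite {Y : Type*} {p : X → Prop} [DecidablePred p] (hp : IsLocallyConstant p) {f g : X → Y}
    (hf : IsLocallyConstant f) (hg : IsLocallyConstant g) :
    IsLocallyConstant (fun x => if p x then f x else g x) := by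
  rw [IsLocallyConstant.iff_eventually_eq]
  intro x
  filter_upwards [hp.eventually_eq x, hf.eventually_eq x, hg.eventually_eq x] with y h1 h2 h3
  simp only [h1, h2, h3]

lemma isClopen_dep {ι : Type*} {c : X → ι} (hc : IsLocallyConstant c) {A : ι → Set X}
    (hA : ∀ i, IsClopen (A i)) : IsClopen {x | x ∈ A (c x)} :=
  isClopen_setOf_lc (lc_dep hc fun i => lc_mem (hA i))

lemma lc_sum {f : ℕ → X → ℤ} (hf : ∀ i, IsLocallyConstant (f i)) (n : ℕ) :
    IsLocallyConstant (fun x => ∑ k ∈ Finset.range n, f k x) := by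
  induction n with
  | zero => exact IsLocallyConstant.const (0 : ℤ)
  | succ n ih =>
    simp only [Finset.sum_range_succ]
    exact ih.comp₂ (hf n) (· + ·)

variable [MeasurableSpace X] [BorelSpace X]

lemma clopen_meas {A : Set X} (hA : IsClopen A) : MeasurableSet A := hA.isOpen.measurableSet

lemma pm_union (μ : ProbabilityMeasure X) {A B : Set X} (h : Disjoint A B) (hB : IsClopen B) :
    (μ (A ∪ B) : ℝ) = μ A + μ B := by
  simpa using measureReal_union (μ := (μ : Measure X)) h (clopen_meas hB)

lemma pm_diff (μ : ProbabilityMeasure X) {A B : Set X} (h : B ⊆ A) (hB : IsClopen B) :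
    (μ (A \ B) : ℝ) = μ A - μ B := by
  simpa using measureReal_sdiff (μ := (μ : Measure X)) h (clopen_meas hB)

lemma pm_mono (μ : ProbabilityMeasure X) {A B : Set X} (h : A ⊆ B) : (μ A : ℝ) ≤ μ B := by
  exact_mod_cast μ.apply_mono h

lemma pm_inter_add (μ : ProbabilityMeasure X) (A : Set X) {B : Set X} (hB : IsClopen B) :
    (μ (A ∩ B) : ℝ) + μ (A \ B) = μ A := by
  simpa using measureReal_inter_add_sdiff (μ := (μ : Measure X)) (s := A) (clopen_meas hB)

lemma preserves_iff {g : X ≃ₜ X} {μ : ProbabilityMeasure X} :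
    Preserves g μ ↔ MeasurePreserving g (μ : Measure X) (μ : Measure X) :=
  ⟨fun h => ⟨g.continuous.measurable, h⟩, fun h => h.map_eq⟩

end Basics

section Measures

variable {X : Type*} [TopologicalSpace X] [CompactSpace X] [TopologicalSpace.MetrizableSpace X]
  [TotallyDisconnectedSpace X] [MeasurableSpace X] [BorelSpace X]
  {K : Set (ProbabilityMeasure X)}

instance countable_clopens : Countable (TopologicalSpace.Clopens X) := by
  let := TopologicalSpace.metrizableSpaceMetric X
  rw [TopologicalSpace.Clopens.countable_iff_secondCountable]
  infer_instance

/-- Finite Borel measures on a Cantor space which agree on clopen sets are equal. -/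
lemma ext_clopen {μ ν : Measure X} [IsFiniteMeasure μ] [IsFiniteMeasure ν]
    (h : ∀ A : Set X, IsClopen A → μ A = ν A) : μ = ν := by
  let := TopologicalSpace.metrizableSpaceMetric X
  have hb := isTopologicalBasis_isClopen (X := X)
  have hgen : ‹MeasurableSpace X› = MeasurableSpace.generateFrom {s : Set X | IsClopen s} := by
    rw [BorelSpace.measurable_eq (α := X)]
    exact hb.borel_eq_generateFrom
  refine ext_of_generate_finite _ hgen ?_ (fun s hs => h s hs) (h _ isClopen_univ)
  intro s hs t ht _
  exact hs.inter ht

lemma preservesAll_of_clopen {g : X ≃ₜ X}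
    (h : ∀ μ ∈ K, ∀ A : Set X, IsClopen A → μ (g ⁻¹' A) = μ A) : PreservesAll K g := by
  intro μ hμ
  have : IsProbabilityMeasure ((μ : Measure X).map g) :=
    Measure.isProbabilityMeasure_map g.continuous.aemeasurable
  refine ext_clopen fun A hA => ?_
  rw [Measure.map_apply g.continuous.measurable (clopen_meas hA)]
  have := h μ hμ A hA
  rw [← ProbabilityMeasure.ennreal_coeFn_eq_coeFn_toMeasure,
    ← ProbabilityMeasure.ennreal_coeFn_eq_coeFn_toMeasure, this]

lemma continuous_pm {A : Set X} (hA : IsClopen A) :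
    Continuous fun μ : ProbabilityMeasure X => (μ A : ℝ) := by
  refine NNReal.continuous_coe.comp ?_
  rw [continuous_iff_continuousAt]
  intro μ
  exact ProbabilityMeasure.tendsto_measure_of_isClopen_of_tendsto tendsto_id hA

lemma PreservesAll.comp {g h : X ≃ₜ X} (hg : PreservesAll K g) (hh : PreservesAll K h) :
    PreservesAll K (h.trans g) := fun μ hμ =>
  preserves_iff.2 ((preserves_iff.1 (hg μ hμ)).comp (preserves_iff.1 (hh μ hμ)))

lemma PreservesAll.symm {g : X ≃ₜ X} (hg : PreservesAll K g) : PreservesAll K g.symm := by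
  intro μ hμ
  have h := preserves_iff.1 (hg μ hμ)
  refine preserves_iff.2 ?_
  have := MeasurePreserving.symm (e := g.toMeasurableEquiv) h
  exact this

lemma PreservesAll.refl : PreservesAll K (Homeomorph.refl X) := fun μ _ =>
  preserves_iff.2 (MeasurePreserving.id _)

lemma PreservesAll.pm_preimage {g : X ≃ₜ X} (hg : PreservesAll K g) {μ : ProbabilityMeasure X}
    (hμ : μ ∈ K) {A : Set X} (hA : MeasurableSet A) : μ (g ⁻¹' A) = μ A := by
  have h := (preserves_iff.1 (hg μ hμ)).measure_preimage hA.nullMeasurableSet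
  rw [ProbabilityMeasure.coeFn_def]
  simp only [h]

lemma PreservesAll.integral_comp {g : X ≃ₜ X} (hg : PreservesAll K g) {μ : ProbabilityMeasure X}
    (hμ : μ ∈ K) (f : X → ℝ) : ∫ x, f (g x) ∂(μ : Measure X) = ∫ x, f x ∂(μ : Measure X) :=
  (preserves_iff.1 (hg μ hμ)).integral_comp g.measurableEmbedding f

lemma integrable_lc {μ : ProbabilityMeasure X} {f : X → ℤ} (hf : IsLocallyConstant f) :
    Integrable (fun x => (f x : ℝ)) (μ : Measure X) := by
  have : Continuous fun x => (f x : ℝ) := (hf.comp (fun n : ℤ => (n : ℝ))).continuous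
  exact this.integrable_of_hasCompactSupport (HasCompactSupport.of_compactSpace _)

lemma continuous_integral_lc {f : X → ℤ} (hf : IsLocallyConstant f) :
    Continuous fun μ : ProbabilityMeasure X => ∫ x, (f x : ℝ) ∂(μ : Measure X) := by
  have : Continuous fun x => (f x : ℝ) := (hf.comp (fun n : ℤ => (n : ℝ))).continuous
  exact ProbabilityMeasure.continuous_integral_continuousMap (⟨_, this⟩ : C(X, ℝ))

lemma exists_pos_lb (hK : IsCompact K) {φ : ProbabilityMeasure X → ℝ} (hφ : Continuous φ)
    (h : ∀ μ ∈ K, 0 < φ μ) : ∃ δ > 0, ∀ μ ∈ K, δ ≤ φ μ := by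
  rcases K.eq_empty_or_nonempty with rfl | hne
  · exact ⟨1, one_pos, by simp⟩
  · obtain ⟨μ, hμ, hmin⟩ := hK.exists_isMinOn hne hφ.continuousOn
    exact ⟨φ μ, h μ hμ, fun ν hν => hmin hν⟩

/-- In a compact set of atomless measures, points have clopen neighbourhoods of uniformly small
measure. -/
lemma exists_small_clopen (hK : IsCompact K) (hat : ∀ μ ∈ K, Atomless μ) (x : X) {U : Set X}
    (hU : IsOpen U) (hxU : x ∈ U) {ε : ℝ} (hε : 0 < ε) :
    ∃ A : Set X, IsClopen A ∧ x ∈ A ∧ A ⊆ U ∧ ∀ μ ∈ K, (μ A : ℝ) < ε := by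
  let := TopologicalSpace.metrizableSpaceMetric X
  refine hK.induction_on (p := fun S => ∃ A : Set X, IsClopen A ∧ x ∈ A ∧ A ⊆ U ∧
    ∀ μ ∈ S, (μ A : ℝ) < ε) ?_ ?_ ?_ ?_
  · obtain ⟨A, hA, hx, hAU⟩ := compact_exists_isClopen_in_isOpen hU hxU
    exact ⟨A, hA, hx, hAU, by simp⟩
  · rintro s t hst ⟨A, hA, hx, hAU, h⟩
    exact ⟨A, hA, hx, hAU, fun μ hμ => h μ (hst hμ)⟩
  · rintro s t ⟨A, hA, hx, hAU, h⟩ ⟨B, hB, hx', hBU, h'⟩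
    refine ⟨A ∩ B, hA.inter hB, ⟨hx, hx'⟩, fun y hy => hAU hy.1, ?_⟩
    rintro μ (hμ | hμ)
    · exact (pm_mono μ Set.inter_subset_left).trans_lt (h μ hμ)
    · exact (pm_mono μ Set.inter_subset_right).trans_lt (h' μ hμ)
  · intro μ hμ
    have h0 : (μ : Measure X) {x} = 0 := by
      have := hat μ hμ x
      rwa [ProbabilityMeasure.null_iff_toMeasure_null] at this
    obtain ⟨V, hxV, hVo, hV⟩ := Set.exists_isOpen_lt_of_lt ({x} : Set X) (ENNReal.ofReal ε)
      (μ := (μ : Measure X)) (by rw [h0]; simpa using hε)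
    obtain ⟨A, hA, hx, hAU⟩ := compact_exists_isClopen_in_isOpen (hU.inter hVo)
      ⟨hxU, hxV rfl⟩
    refine ⟨{ν | (ν A : ℝ) < ε}, ?_, A, hA, hx, fun y hy => (hAU hy).1, fun ν hν => hν⟩
    refine mem_nhdsWithin_of_mem_nhds ((isOpen_lt (continuous_pm hA) continuous_const).mem_nhds ?_)
    have h1 : (μ : Measure X) A < ENNReal.ofReal ε :=
      (measure_mono fun y hy => (hAU hy).2).trans_lt hV
    have h2 : (μ : Measure X).real A < ε := by
      rw [Measure.real]
      exact (ENNReal.toReal_lt_of_lt_ofReal h1)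
    simpa using h2

end Measures

end DynSimplex

/-! ### Homogeneity -/

namespace DynSimplex

section Homogeneity

variable {X : Type*} [TopologicalSpace X] [CompactSpace X] [TopologicalSpace.MetrizableSpace X]
  [TotallyDisconnectedSpace X] [MeasurableSpace X] [BorelSpace X]
  {K : Set (ProbabilityMeasure X)}

/-- Two labellings of `X` are matched when every set of labels has preimages of equal measure
under all members of `K`. -/
def Matched (K : Set (ProbabilityMeasure X)) {ι : Type*} (P Q : X → ι) : Prop :=
  ∀ S : Set ι, ∀ μ ∈ K, μ (P ⁻¹' S) = μ (Q ⁻¹' S)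

lemma Matched.symm {ι : Type*} {P Q : X → ι} (h : Matched K P Q) : Matched K Q P :=
  fun S μ hμ => (h S μ hμ).symm

lemma Matched.comp {ι κ : Type*} {P Q : X → ι} (h : Matched K P Q) (f : ι → κ) :
    Matched K (fun x => f (P x)) (fun x => f (Q x)) :=
  fun S μ hμ => h (f ⁻¹' S) μ hμ

lemma matched_of_fibers {ι : Type*} {P Q : X → ι} (hP : IsLocallyConstant P)
    (hQ : IsLocallyConstant Q) (h : ∀ i, ∀ μ ∈ K, μ (P ⁻¹' {i}) = μ (Q ⁻¹' {i})) :
    Matched K P Q := by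
  classical
  intro S μ hμ
  let T : Finset ι := (hP.range_finite.toFinset ∪ hQ.range_finite.toFinset).filter (· ∈ S)
  have h1 : P ⁻¹' S = P ⁻¹' (T : Set ι) := by
    ext x; simp [T]
  have h2 : Q ⁻¹' S = Q ⁻¹' (T : Set ι) := by
    ext x; simp [T]
  have e1 := sum_measure_preimage_singleton (μ := (μ : Measure X)) (f := P) T
    fun y _ => clopen_meas (isClopen_preimage_of_lc hP _)
  have e2 := sum_measure_preimage_singleton (μ := (μ : Measure X)) (f := Q) T
    fun y _ => clopen_meas (isClopen_preimage_of_lc hQ _)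
  have e3 : (μ : Measure X) (P ⁻¹' (T : Set ι)) = (μ : Measure X) (Q ⁻¹' (T : Set ι)) := by
    rw [← e1, ← e2]
    refine Finset.sum_congr rfl fun i _ => ?_
    rw [← ProbabilityMeasure.ennreal_coeFn_eq_coeFn_toMeasure,
      ← ProbabilityMeasure.ennreal_coeFn_eq_coeFn_toMeasure, h i μ hμ]
  rw [h1, h2, ProbabilityMeasure.coeFn_def]
  simp only [e3]

lemma DynamicalSimplex.pos (hK : DynamicalSimplex K) {μ : ProbabilityMeasure X} (hμ : μ ∈ K)
    {U : Set X} (hU : IsOpen U) (hne : U.Nonempty) : 0 < (μ U : ℝ) := by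
  exact_mod_cast (hK.2.2.2.1 μ hμ).2 U hU hne

/-- Goodness allows to transport a clopen subset of `A` to an equivalent set `B`. -/
lemma DynamicalSimplex.transport (hK : DynamicalSimplex K) {A B C : Set X} (hA : IsClopen A)
    (hB : IsClopen B) (hC : IsClopen C) (hAB : ∀ μ ∈ K, μ A = μ B) (hCA : C ⊆ A) :
    ∃ D : Set X, IsClopen D ∧ D ⊆ B ∧ ∀ μ ∈ K, μ D = μ C := by
  by_cases h : C = A
  · exact ⟨B, hB, le_rfl, fun μ hμ => by rw [h, hAB μ hμ]⟩
  · have hne : (A \ C).Nonempty := by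
      rw [Set.sdiff_nonempty]
      exact fun h' => h (hCA.antisymm h')
    refine hK.2.2.2.2.1 C B hC hB fun μ hμ => ?_
    have h1 := hK.pos hμ (hA.diff hC).isOpen hne
    rw [pm_diff μ hCA hC, hAB μ hμ] at h1
    exact_mod_cast (by linarith : (μ C : ℝ) < μ B)

/-- The forth half of a back-and-forth step: given matched labellings `P` and `Q` and a clopen set
`C`, some clopen `D` is such that `P` refined by `C` and `Q` refined by `D` are matched. -/
lemma DynamicalSimplex.extend (hK : DynamicalSimplex K) {ι : Type*} {P Q : X → ι}
    (hP : IsLocallyConstant P) (hQ : IsLocallyConstant Q) (h : Matched K P Q) {C : Set X}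
    (hC : IsClopen C) :
    ∃ D : Set X, IsClopen D ∧ Matched K (fun x => (P x, x ∈ C)) (fun x => (Q x, x ∈ D)) := by
  have key : ∀ i, ∃ D : Set X, IsClopen D ∧ D ⊆ Q ⁻¹' {i} ∧
      ∀ μ ∈ K, μ D = μ (P ⁻¹' {i} ∩ C) := fun i =>
    hK.transport (isClopen_preimage_of_lc hP {i}) (isClopen_preimage_of_lc hQ {i})
      ((isClopen_preimage_of_lc hP {i}).inter hC) (h {i}) Set.inter_subset_left
  choose D hD hDQ hDμ using key
  have hDc : IsClopen {x | x ∈ D (Q x)} := isClopen_dep hQ hD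
  refine ⟨{x | x ∈ D (Q x)}, hDc, ?_⟩
  refine matched_of_fibers (hP.prodMk (lc_mem hC)) (hQ.prodMk (lc_mem hDc)) ?_
  have e0 : ∀ i, Q ⁻¹' {i} ∩ {x | x ∈ D (Q x)} = D i := by
    intro i
    ext x
    constructor
    · rintro ⟨h1, h2⟩
      have h1 : Q x = i := h1
      simpa [h1] using h2
    · intro hx
      have h1 : Q x = i := hDQ i hx
      exact ⟨h1, by simpa [h1] using hx⟩
  rintro ⟨i, p⟩ μ hμ
  by_cases hp : p
  · have e1 : (fun x => (P x, x ∈ C)) ⁻¹' {(i, p)} = P ⁻¹' {i} ∩ C := by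
      ext x; simp [hp]
    have e2 : (fun x => (Q x, x ∈ {x | x ∈ D (Q x)})) ⁻¹' {(i, p)} = D i := by
      rw [← e0]; ext x; simp [hp]
    rw [e1, e2, hDμ i μ hμ]
  · have e1 : (fun x => (P x, x ∈ C)) ⁻¹' {(i, p)} = P ⁻¹' {i} \ C := by
      ext x; simp [hp]
    have e2 : (fun x => (Q x, x ∈ {x | x ∈ D (Q x)})) ⁻¹' {(i, p)} =
        Q ⁻¹' {i} \ {x | x ∈ D (Q x)} := by
      ext x; simp [hp]
    rw [e1, e2]
    have a1 := pm_inter_add μ (P ⁻¹' {i}) hC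
    have a2 := pm_inter_add μ (Q ⁻¹' {i}) hDc
    have a3 : (μ (P ⁻¹' {i} ∩ C) : ℝ) = μ (Q ⁻¹' {i} ∩ {x | x ∈ D (Q x)}) := by
      rw [e0, hDμ i μ hμ]
    have a4 : (μ (P ⁻¹' {i}) : ℝ) = μ (Q ⁻¹' {i}) := by rw [h {i} μ hμ]
    apply NNReal.coe_injective
    linarith

/-- One back-and-forth step: matched labellings are refined so that both determine `C`. -/
lemma DynamicalSimplex.backForth (hK : DynamicalSimplex K) {ι : Type*}
    {P Q : X → ι × List Prop} (hP : IsLocallyConstant P) (hQ : IsLocallyConstant Q)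
    (h : Matched K P Q) {C : Set X} (hC : IsClopen C) :
    ∃ P' Q' : X → ι × List Prop, IsLocallyConstant P' ∧ IsLocallyConstant Q' ∧ Matched K P' Q' ∧
      (∃ r : ι × List Prop → ι × List Prop, (∀ x, P x = r (P' x)) ∧ ∀ x, Q x = r (Q' x)) ∧
      (∃ S, C = P' ⁻¹' S) ∧ ∃ S, C = Q' ⁻¹' S := by
  obtain ⟨D, hD, hPD⟩ := hK.extend hP hQ h hC
  obtain ⟨E, hE, hQE⟩ := hK.extend (hQ.prodMk (lc_mem hD)) (hP.prodMk (lc_mem hC)) hPD.symm hC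
  let enc : ((ι × List Prop) × Prop) × Prop → ι × List Prop :=
    fun t => (t.1.1.1, t.2 :: t.1.2 :: t.1.1.2)
  refine ⟨fun x => enc ((P x, x ∈ C), x ∈ E), fun x => enc ((Q x, x ∈ D), x ∈ C),
    ((hP.prodMk (lc_mem hC)).prodMk (lc_mem hE)).comp enc,
    ((hQ.prodMk (lc_mem hD)).prodMk (lc_mem hC)).comp enc, hQE.symm.comp enc,
    ⟨fun t => (t.1, t.2.drop 2), fun x => by simp [enc], fun x => by simp [enc]⟩,
    ⟨{t | t.2[1]? = some True}, ?_⟩, ⟨{t | t.2[0]? = some True}, ?_⟩⟩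
  · ext x; simp [enc]
  · ext x; simp [enc]

/-- Along a refining sequence of matched labellings, every point has a partner with the same labels:
matched fibres are nonempty together because the measures have full support. -/
lemma exists_partner (hK : DynamicalSimplex K) {ι : Type*} {P Q : ℕ → X → ι}
    (hP : ∀ n, IsLocallyConstant (P n)) (hQ : ∀ n, IsLocallyConstant (Q n))
    (h : ∀ n, Matched K (P n) (Q n))
    (hr : ∀ n, ∃ r : ι → ι, (∀ x, P n x = r (P (n + 1) x)) ∧ ∀ x, Q n x = r (Q (n + 1) x))
    (x : X) : ∃ y, ∀ n, Q n y = P n x := by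
  have := IsCompact.nonempty_iInter_of_sequence_nonempty_isCompact_isClosed
    (fun n => Q n ⁻¹' {P n x}) ?_ ?_ ?_ ?_
  · obtain ⟨y, hy⟩ := this
    exact ⟨y, fun n => Set.mem_iInter.1 hy n⟩
  · intro n y hy
    obtain ⟨r, h1, h2⟩ := hr n
    change Q n y = P n x
    rw [h1, h2]
    exact congrArg r hy
  · intro n
    obtain ⟨μ, hμ⟩ := hK.1
    have h1 := hK.pos hμ (isClopen_preimage_of_lc (hP n) {P n x}).isOpen ⟨x, rfl⟩
    rw [h n _ μ hμ] at h1
    by_contra h2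
    rw [Set.not_nonempty_iff_eq_empty] at h2
    rw [h2] at h1
    simp at h1
  · exact (isClopen_preimage_of_lc (hQ 0) _).isClosed.isCompact
  · exact fun n => (isClopen_preimage_of_lc (hQ n) _).isClosed

lemma eq_of_clopen {x y : X} (h : ∀ A : Set X, IsClopen A → (x ∈ A ↔ y ∈ A)) : x = y := by
  by_contra hne
  obtain ⟨A, hA, hx, hAU⟩ := compact_exists_isClopen_in_isOpen
    (isOpen_compl_singleton (x := y)) (Set.mem_compl_singleton_iff.2 hne)
  exact hAU ((h A hA).1 hx) rfl

/-- Homogeneity: matched locally constant labellings are conjugate by a homeomorphism preserving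
every measure in `K`.  The homeomorphism is built by a back-and-forth argument. -/
theorem DynamicalSimplex.homogeneous (hK : DynamicalSimplex K) {ι : Type*} {P Q : X → ι}
    (hP : IsLocallyConstant P) (hQ : IsLocallyConstant Q) (h : Matched K P Q) :
    ∃ φ : X ≃ₜ X, PreservesAll K φ ∧ ∀ x, Q (φ x) = P x := by
  classical
  let L := ι × List Prop
  let St := {PQ : (X → L) × (X → L) // IsLocallyConstant PQ.1 ∧ IsLocallyConstant PQ.2 ∧
    Matched K PQ.1 PQ.2}
  obtain ⟨C, hC⟩ := exists_surjective_nat (TopologicalSpace.Clopens X)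
  have step : ∀ (s : St) (n : ℕ), ∃ t : St,
      (∃ r : L → L, (∀ x, s.1.1 x = r (t.1.1 x)) ∧ ∀ x, s.1.2 x = r (t.1.2 x)) ∧
      (∃ S, (C n : Set X) = t.1.1 ⁻¹' S) ∧ ∃ S, (C n : Set X) = t.1.2 ⁻¹' S := by
    rintro ⟨⟨P, Q⟩, h1, h2, h3⟩ n
    obtain ⟨P', Q', a, b, c, d⟩ := hK.backForth h1 h2 h3 (C n).isClopen
    exact ⟨⟨(P', Q'), a, b, c⟩, d⟩
  choose nxt hnxt using step
  let s0 : St := ⟨(fun x => (P x, []), fun x => (Q x, [])), hP.comp (fun i => (i, [])),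
    hQ.comp (fun i => (i, [])), h.comp (fun i => (i, []))⟩
  let s : ℕ → St := fun n => Nat.rec s0 (fun n t => nxt t n) n
  have hs : ∀ n, s (n + 1) = nxt (s n) n := fun n => rfl
  have hp := fun n => (s n).2.1
  have hq := fun n => (s n).2.2.1
  have hm := fun n => (s n).2.2.2
  have hr : ∀ n, ∃ r : L → L, (∀ x, (s n).1.1 x = r ((s (n + 1)).1.1 x)) ∧
      ∀ x, (s n).1.2 x = r ((s (n + 1)).1.2 x) := fun n => (hnxt (s n) n).1
  have cp : ∀ A : Set X, IsClopen A → ∃ n S, A = (s n).1.1 ⁻¹' S ∧ ∃ S', A = (s n).1.2 ⁻¹' S' := by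
    intro A hA
    obtain ⟨n, hn⟩ := hC ⟨A, hA⟩
    obtain ⟨S, hS⟩ := (hnxt (s n) n).2.1
    obtain ⟨S', hS'⟩ := (hnxt (s n) n).2.2
    rw [hn] at hS hS'
    exact ⟨n + 1, S, hS, S', hS'⟩
  have up : ∀ y y', (∀ n, (s n).1.1 y = (s n).1.1 y') → y = y' := by
    intro y y' hy
    refine eq_of_clopen fun A hA => ?_
    obtain ⟨n, S, hS, -⟩ := cp A hA
    simp [hS, hy n]
  have uq : ∀ y y', (∀ n, (s n).1.2 y = (s n).1.2 y') → y = y' := by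
    intro y y' hy
    refine eq_of_clopen fun A hA => ?_
    obtain ⟨n, -, -, S, hS⟩ := cp A hA
    simp [hS, hy n]
  -- the labels eventually determine all clopen sets, so partners are unique and depend
  -- continuously on the point
  choose φ hφ using fun x => exists_partner hK hp hq hm hr x
  choose ψ hψ using fun x => exists_partner hK hq hp (fun n => (hm n).symm)
    (fun n => (hr n).imp fun r hr => hr.symm) x
  have cφ : Continuous φ := by
    rw [isTopologicalBasis_isClopen.continuous_iff]
    intro A hA
    obtain ⟨n, -, -, S, hS⟩ := cp A hA
    have : φ ⁻¹' A = (s n).1.1 ⁻¹' S := by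
      ext x; rw [hS]; simp [hφ]
    rw [this]
    exact hp n S
  have cψ : Continuous ψ := by
    rw [isTopologicalBasis_isClopen.continuous_iff]
    intro A hA
    obtain ⟨n, S, hS, -⟩ := cp A hA
    have : ψ ⁻¹' A = (s n).1.2 ⁻¹' S := by
      ext x; rw [hS]; simp [hψ]
    rw [this]
    exact hq n S
  refine ⟨⟨⟨φ, ψ, fun x => up _ _ fun n => by rw [hψ, hφ], fun x => uq _ _ fun n => by
    rw [hφ, hψ]⟩, cφ, cψ⟩, ?_, ?_⟩
  · refine preservesAll_of_clopen fun μ hμ A hA => ?_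
    obtain ⟨n, -, -, S, hS⟩ := cp A hA
    have : φ ⁻¹' A = (s n).1.1 ⁻¹' S := by
      ext x; rw [hS]; simp [hφ]
    change μ (φ ⁻¹' A) = μ A
    rw [this, hS, hm n S μ hμ]
  · intro x
    exact congrArg Prod.fst (hφ x 0)

/-- Restriction of a homeomorphism to an invariant clopen set, extended by the identity. -/
lemma exists_restrict {g : X ≃ₜ X} (hg : PreservesAll K g) {A : Set X} (hA : IsClopen A)
    (hgA : ∀ x, g x ∈ A ↔ x ∈ A) :
    ∃ g' : X ≃ₜ X, PreservesAll K g' ∧ (∀ x ∈ A, g' x = g x) ∧ ∀ x ∉ A, g' x = x := by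
  classical
  have hgA' : ∀ x, g.symm x ∈ A ↔ x ∈ A := fun x => by rw [← hgA]; simp
  have cont : ∀ k : X ≃ₜ X, Continuous fun x => if x ∈ A then k x else x := fun k =>
    continuous_dep (lc_mem hA) (f := fun p x => if p then k x else x)
      (fun p => by by_cases hp : p <;> simp [hp, k.continuous, continuous_id'])
  refine ⟨⟨⟨fun x => if x ∈ A then g x else x, fun x => if x ∈ A then g.symm x else x, ?_, ?_⟩,
    cont g, cont g.symm⟩, ?_, ?_, ?_⟩
  · intro x
    by_cases hx : x ∈ A <;> simp [hx, hgA]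
  · intro x
    by_cases hx : x ∈ A <;> simp [hx, hgA']
  · refine preservesAll_of_clopen fun μ hμ B hB => ?_
    have e1 : (fun x => if x ∈ A then g x else x) ⁻¹' B = (g ⁻¹' (B ∩ A)) ∪ (B \ A) := by
      ext x
      by_cases hx : x ∈ A <;> simp [hx, hgA]
    change μ ((fun x => if x ∈ A then g x else x) ⁻¹' B) = μ B
    apply NNReal.coe_injective
    rw [e1, pm_union μ _ (hB.diff hA), hg.pm_preimage hμ (clopen_meas (hB.inter hA)),
      pm_inter_add μ B hA]
    rw [Set.disjoint_left]
    rintro x ⟨-, hx⟩ ⟨-, hx'⟩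
    exact hx' ((hgA x).1 hx)
  · intro x hx
    simp [hx]
  · intro x hx
    simp [hx]

/-- Localised homogeneity: matched labellings of a clopen set `A` are conjugate by a homeomorphism
supported in `A`. -/
theorem DynamicalSimplex.homogeneousOn (hK : DynamicalSimplex K) {ι : Type*} {P Q : X → ι}
    (hP : IsLocallyConstant P) (hQ : IsLocallyConstant Q) {A : Set X} (hA : IsClopen A)
    (h : ∀ i, ∀ μ ∈ K, μ {x | x ∈ A ∧ P x = i} = μ {x | x ∈ A ∧ Q x = i}) :
    ∃ φ : X ≃ₜ X, PreservesAll K φ ∧ (∀ x ∉ A, φ x = x) ∧ ∀ x ∈ A, φ x ∈ A ∧ Q (φ x) = P x := by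
  classical
  have lc : ∀ R : X → ι, IsLocallyConstant R →
      IsLocallyConstant (fun x => if x ∈ A then some (R x) else none) := fun R hR =>
    lc_ite (lc_mem hA) (hR.comp some) (IsLocallyConstant.const none)
  have e1 : ∀ (R : X → ι) i, (fun x => if x ∈ A then some (R x) else none) ⁻¹' {some i} =
      {x | x ∈ A ∧ R x = i} := by
    intro R i
    ext x
    by_cases hx : x ∈ A <;> simp [hx]
  have e2 : ∀ (R : X → ι), (fun x => if x ∈ A then some (R x) else none) ⁻¹' {none} = Aᶜ := by
    intro R
    ext x
    by_cases hx : x ∈ A <;> simp [hx]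
  obtain ⟨φ, hφ, hφl⟩ := hK.homogeneous (lc P hP) (lc Q hQ) (matched_of_fibers (lc P hP) (lc Q hQ)
    (by
      rintro (_ | i) μ hμ
      · rw [e2, e2]
      · rw [e1, e1, h i μ hμ]))
  have hφA : ∀ x, φ x ∈ A ↔ x ∈ A := by
    intro x
    have := hφl x
    by_cases h1 : x ∈ A <;> by_cases h2 : φ x ∈ A <;> simp_all
  obtain ⟨φ', h1, h2, h3⟩ := exists_restrict hφ hA hφA
  refine ⟨φ', h1, h3, fun x hx => ?_⟩
  rw [h2 x hx]
  have := hφl x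
  rw [if_pos hx, if_pos ((hφA x).2 hx)] at this
  exact ⟨(hφA x).2 hx, Option.some_injective _ this⟩

end Homogeneity

end DynSimplex

/-! ### Return maps and induced problems -/

namespace DynSimplex

section ReturnMaps

variable {X : Type*} [TopologicalSpace X] [CompactSpace X] [TopologicalSpace.MetrizableSpace X]
  [TotallyDisconnectedSpace X] [MeasurableSpace X] [BorelSpace X]
  {K : Set (ProbabilityMeasure X)}

lemma PreservesAll.iter {g : X ≃ₜ X} (hg : PreservesAll K g) (n : ℕ) :
    ∃ h : X ≃ₜ X, PreservesAll K h ∧ ∀ x, h x = g^[n] x := by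
  induction n with
  | zero => exact ⟨Homeomorph.refl X, PreservesAll.refl, fun x => rfl⟩
  | succ n ih =>
    obtain ⟨h, h1, h2⟩ := ih
    refine ⟨g.trans h, h1.comp hg, fun x => ?_⟩
    simp [h2, Function.iterate_succ_apply]

/-- An injective map given piecewise by powers of `g` is automatically a homeomorphism preserving
`K`: it does not increase measures, and its range has full measure. -/
lemma DynamicalSimplex.piecewise (hK : DynamicalSimplex K) {g : X ≃ₜ X} (hg : PreservesAll K g)
    {c : X → ℕ} (hc : IsLocallyConstant c) (hinj : Function.Injective fun x => g^[c x] x) :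
    ∃ R : X ≃ₜ X, PreservesAll K R ∧ ∀ x, R x = g^[c x] x := by
  let φ : X → X := fun x => g^[c x] x
  have hφ : Continuous φ := continuous_dep hc (f := fun n x => g^[n] x)
    fun n => g.continuous.iterate n
  have hmap : ∀ μ ∈ K, (μ : Measure X).map φ = (μ : Measure X) := by
    intro μ hμ
    have : IsProbabilityMeasure ((μ : Measure X).map φ) :=
      Measure.isProbabilityMeasure_map hφ.aemeasurable
    choose G hG1 hG2 using hg.iter
    have hcl : ∀ n, MeasurableSet (c ⁻¹' {n}) := fun n =>
      clopen_meas (isClopen_preimage_of_lc hc _)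
    have hle : (μ : Measure X).map φ ≤ (μ : Measure X) := by
      rw [Measure.le_iff]
      intro A hA
      rw [Measure.map_apply hφ.measurable hA]
      have e1 : φ ⁻¹' A = ⋃ n, (c ⁻¹' {n} ∩ G n ⁻¹' A) := by
        ext x
        simp [φ, hG2]
      have e2 : ∀ n, (μ : Measure X) (c ⁻¹' {n} ∩ G n ⁻¹' A) =
          (μ : Measure X) (G n '' (c ⁻¹' {n}) ∩ A) := by
        intro n
        have hm : MeasurableSet (G n '' (c ⁻¹' {n})) :=
          (G n).measurableEmbedding.measurableSet_image.2 (hcl n)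
        rw [← (preserves_iff.1 (hG1 n μ hμ)).measure_preimage (hm.inter hA).nullMeasurableSet,
          Set.preimage_inter, Set.preimage_image_eq _ (G n).injective]
      rw [e1]
      calc (μ : Measure X) (⋃ n, (c ⁻¹' {n} ∩ G n ⁻¹' A))
          ≤ ∑' n, (μ : Measure X) (c ⁻¹' {n} ∩ G n ⁻¹' A) := measure_iUnion_le _
        _ = ∑' n, (μ : Measure X) (G n '' (c ⁻¹' {n}) ∩ A) := by simp_rw [e2]
        _ = (μ : Measure X) (⋃ n, (G n '' (c ⁻¹' {n}) ∩ A)) := by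
            rw [measure_iUnion]
            · intro i j hij
              rw [Function.onFun, Set.disjoint_left]
              rintro _ ⟨⟨x, hx, rfl⟩, -⟩ ⟨⟨y, hy, hxy⟩, -⟩
              have hx : c x = i := hx
              have hy : c y = j := hy
              rw [hG2, hG2] at hxy
              have : y = x := hinj (by simp only [hx, hy, hxy])
              exact hij (by rw [← hx, ← hy, this])
            · exact fun n => ((G n).measurableEmbedding.measurableSet_image.2 (hcl n)).inter hA
        _ ≤ (μ : Measure X) A := measure_mono (by simp)
    exact Measure.eq_of_le_of_measure_univ_eq hle (by simp)
  have hsurj : Function.Surjective φ := by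
    by_contra hns
    rw [← Set.range_eq_univ, ← ne_eq, Set.ne_univ_iff_exists_notMem] at hns
    obtain ⟨y, hy⟩ := hns
    obtain ⟨μ, hμ⟩ := hK.1
    have hcl : IsClosed (Set.range φ) := (isCompact_range hφ).isClosed
    have h1 := (hK.2.2.2.1 μ hμ).2 _ hcl.isOpen_compl ⟨y, hy⟩
    have h2 : (μ : Measure X) (Set.range φ)ᶜ = 0 := by
      rw [← hmap μ hμ, Measure.map_apply hφ.measurable hcl.measurableSet.compl]
      have : φ ⁻¹' (Set.range φ)ᶜ = ∅ := by ext x; simp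
      simp [this]
    rw [← ProbabilityMeasure.null_iff_toMeasure_null] at h2
    exact h1.ne' h2
  let e : X ≃ X := Equiv.ofBijective φ ⟨hinj, hsurj⟩
  refine ⟨Continuous.homeoOfEquivCompactToT2 (f := e) hφ, fun μ hμ => hmap μ hμ, fun x => rfl⟩

/-- First hitting times of a clopen set are locally constant. -/
lemma exists_hit {g : X → X} (hg : Continuous g) {D : Set X} (hD : IsClopen D)
    (h : ∀ x, ∃ k, g^[k] x ∈ D) :
    ∃ τ : X → ℕ, IsLocallyConstant τ ∧ (∀ x, g^[τ x] x ∈ D) ∧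
      (∀ x ∈ D, τ x = 0) ∧ (∀ x ∉ D, τ x = τ (g x) + 1) := by
  classical
  refine ⟨fun x => Nat.find (h x), ?_, fun x => Nat.find_spec (h x), ?_, ?_⟩
  · rw [IsLocallyConstant.iff_eventually_eq]
    intro x
    have h1 : ∀ᶠ y in 𝓝 x, ∀ k ∈ Finset.range (Nat.find (h x) + 1),
        (g^[k] y ∈ D ↔ g^[k] x ∈ D) := by
      rw [Filter.eventually_all_finset]
      intro k _
      filter_upwards [((lc_mem hD).comp_continuous (hg.iterate k)).eventually_eq x] with y hy
      exact iff_of_eq hy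
    filter_upwards [h1] with y hy
    rw [Nat.find_eq_iff]
    refine ⟨(hy _ (by simp)).2 (Nat.find_spec (h x)), fun k hk hk' => ?_⟩
    exact Nat.find_min (h x) hk ((hy k (Finset.mem_range.2 (Nat.lt_succ_of_lt hk))).1 hk')
  · intro x hx
    simpa using hx
  · intro x hx
    rw [Nat.find_eq_iff]
    refine ⟨by simpa [Function.iterate_succ_apply] using Nat.find_spec (h (g x)), ?_⟩
    rintro (_ | k) hk
    · simpa using hx
    · rw [Function.iterate_succ_apply]
      exact Nat.find_min (h (g x)) (Nat.lt_of_succ_lt_succ hk)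

lemma hit_min {g : X → X} {D : Set X} {τ : X → ℕ} (h2 : ∀ x ∉ D, τ x = τ (g x) + 1)
    (h1 : ∀ x ∈ D, τ x = 0) : ∀ (k : ℕ) x, k < τ x → g^[k] x ∉ D := by
  intro k
  induction k with
  | zero =>
    intro x hx hxD
    have := h1 x hxD
    omega
  | succ k ih =>
    intro x hx
    by_cases hxD : x ∈ D
    · have := h1 x hxD
      omega
    · rw [Function.iterate_succ_apply]
      refine ih _ ?_
      have := h2 x hxD
      omega

/-- `Solv K B F`: some `K`-preserving homeomorphism `S` supported in `B` makes `F` cohomologous to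
a nonnegative function on `B`, by a transfer function vanishing on a clopen set which is met by all
`S`-orbits. -/
def Solv (K : Set (ProbabilityMeasure X)) (B : Set X) (F : X → ℤ) : Prop :=
  ∃ S : X ≃ₜ X, PreservesAll K S ∧ (∀ x ∉ B, S x = x) ∧ ∃ (h : X → ℤ) (B' : Set X),
    IsLocallyConstant h ∧ IsClopen B' ∧ B' ⊆ B ∧ (∀ x ∈ B', h x = 0) ∧
    (∀ x ∈ B, 0 ≤ F x + h (S x) - h x) ∧ ∀ x ∈ B, ∃ k, S^[k] x ∈ B'

lemma mem_iff_of_supp {g : X ≃ₜ X} {B : Set X} (h : ∀ x ∉ B, g x = x) (x : X) :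
    g x ∈ B ↔ x ∈ B := by
  constructor
  · intro hx
    by_contra hn
    rw [h x hn] at hx
    exact hn hx
  · intro hx
    by_contra hn
    have := g.injective (h _ hn)
    rw [this] at hn
    exact hn hx

lemma iterate_mem_iff {g : X → X} {B : Set X} (h : ∀ x, g x ∈ B ↔ x ∈ B) (n : ℕ) (x : X) :
    g^[n] x ∈ B ↔ x ∈ B := by
  induction n generalizing x with
  | zero => rfl
  | succ n ih => rw [Function.iterate_succ_apply, ih, h]

/-- Solving the problem for the map induced by `g` on `B₁` solves it for `g` on `B`, after
modifying `g` by an element supported in `B₁`. -/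
lemma DynamicalSimplex.reduction (hK : DynamicalSimplex K) {g : X ≃ₜ X} (hg : PreservesAll K g)
    {B B₁ : Set X} (hB : IsClopen B) (hB₁ : IsClopen B₁) (hBB : B₁ ⊆ B)
    (hgB : ∀ x ∉ B, g x = x) {F F₁ : X → ℤ} (hF : IsLocallyConstant F)
    (hrec : ∀ x ∈ B, ∃ k, g^[k] x ∈ B₁)
    (hret : ∀ x ∈ B₁, ∃ m, 1 ≤ m ∧ g^[m] x ∈ B₁ ∧ (∀ k, 0 < k → k < m → g^[k] x ∉ B₁) ∧
      F₁ x ≤ ∑ k ∈ Finset.range m, F (g^[k] x)) (hS : Solv K B₁ F₁) :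
    ∃ γ : X ≃ₜ X, PreservesAll K γ ∧ (∀ x ∉ B₁, γ x = x) ∧ ∃ (h : X → ℤ) (B' : Set X),
      IsLocallyConstant h ∧ IsClopen B' ∧ B' ⊆ B₁ ∧ (∀ x ∈ B', h x = 0) ∧
      (∀ x ∈ B, 0 ≤ F x + h (γ (g x)) - h x) ∧ ∀ x ∈ B, ∃ k, (fun y => γ (g y))^[k] x ∈ B' := by
  classical
  obtain ⟨S, hSK, hSs, h, B', hh, hB', hB'B, h0, hcoc, hSrec⟩ := hS
  have hgB' := mem_iff_of_supp hgB
  let D := B₁ ∪ Bᶜ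
  have hD : IsClopen D := hB₁.union hB.compl
  have hDrec : ∀ x, ∃ k, g^[k] x ∈ D := by
    intro x
    by_cases hx : x ∈ B
    · exact (hrec x hx).imp fun k hk => Or.inl hk
    · exact ⟨0, Or.inr hx⟩
  obtain ⟨τ, hτ, hτD, hτ0, hτ1⟩ := exists_hit g.continuous hD hDrec
  have hmin := hit_min hτ1 hτ0
  -- the induced map on `D`, extended by the identity
  obtain ⟨R, hRK, hR⟩ := hK.piecewise hg
    (c := fun x => if x ∈ D then τ (g x) + 1 else 0)
    (lc_ite (lc_mem hD) ((hτ.comp_continuous g.continuous).comp (· + 1))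
      (IsLocallyConstant.const 0)) (by
    have aux : ∀ x ∈ D, ∀ y ∈ D, τ (g x) ≤ τ (g y) →
        g^[τ (g x) + 1] x = g^[τ (g y) + 1] y → x = y := by
      intro x hx y hy hle hxy
      obtain ⟨d, hd⟩ := Nat.exists_eq_add_of_le hle
      have e : g^[τ (g y) + 1] y = g^[τ (g x) + 1] (g^[d] y) := by
        rw [← Function.iterate_add_apply, hd]
        have : τ (g x) + d + 1 = τ (g x) + 1 + d := by omega
        rw [this]
      rw [e] at hxy
      have hx' := (g.injective.iterate _) hxy
      rcases d with _ | d
      · exact hx'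
      · rw [Function.iterate_succ_apply] at hx'
        exact absurd (hx' ▸ hx) (hmin d (g y) (by omega))
    intro x y hxy
    by_cases hx : x ∈ D <;> by_cases hy : y ∈ D
    · simp only [hx, hy, if_true] at hxy
      rcases le_total (τ (g x)) (τ (g y)) with hle | hle
      · exact aux x hx y hy hle hxy
      · exact (aux y hy x hx hle hxy.symm).symm
    · simp only [hx, hy, if_true, if_false] at hxy
      have : g^[τ (g x) + 1] x ∈ D := hτD (g x)
      rw [hxy] at this
      exact absurd this hy
    · simp only [hx, hy, if_true, if_false] at hxy
      have : g^[τ (g y) + 1] y ∈ D := hτD (g y)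
      rw [← hxy] at this
      exact absurd this hx
    · simpa [hx, hy] using hxy)
  -- `p` is the first point of the orbit in `D`, and `u` the sum of `F` until then
  let p : X → X := fun x => g^[τ x] x
  let u : X → ℤ := fun x => ∑ k ∈ Finset.range (τ x), F (g^[k] x)
  have hu : IsLocallyConstant u := lc_dep hτ
    (f := fun n x => ∑ k ∈ Finset.range n, F (g^[k] x))
    fun n => lc_sum (fun k => hF.comp_continuous (g.continuous.iterate k)) n
  have hp : Continuous p := continuous_dep hτ (f := fun n x => g^[n] x)
    fun n => g.continuous.iterate n
  have pD : ∀ x ∈ D, p x = x := fun x hx => by simp [p, hτ0 x hx]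
  have pD' : ∀ x ∉ D, p x = p (g x) := fun x hx => by
    simp only [p, hτ1 x hx, Function.iterate_succ_apply]
  have uD : ∀ x ∈ D, u x = 0 := fun x hx => by simp [u, hτ0 x hx]
  have uD' : ∀ x ∉ D, u x = F x + u (g x) := fun x hx => by
    simp only [u, hτ1 x hx, Finset.sum_range_succ', Function.iterate_succ_apply]
    simp [add_comm]
  have hRD : ∀ x ∈ D, R x = p (g x) := fun x hx => by
    rw [hR, if_pos hx, Function.iterate_succ_apply]
  have hRD' : ∀ x ∉ D, R x = x := fun x hx => by rw [hR, if_neg hx]; rfl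
  have hRB₁ : ∀ x ∉ B₁, R x = x := by
    intro x hx
    by_cases hxB : x ∈ B
    · exact hRD' x (by rintro (h | h); exacts [hx h, h hxB])
    · rw [hRD x (Or.inr hxB), hgB x hxB, pD x (Or.inr hxB)]
  let γ : X ≃ₜ X := R.symm.trans S
  have hγ : ∀ x, γ (R x) = S x := fun x => by simp [γ]
  have hγs : ∀ x ∉ B₁, γ x = x := fun x hx => by
    have := hγ x
    rwa [hRB₁ x hx, hSs x hx] at this
  have hγD : ∀ x ∉ D, γ x = x := fun x hx => hγs x fun h => hx (Or.inl h)
  have hγB₁ := mem_iff_of_supp hγs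
  have DB : ∀ x ∈ B, x ∈ D → x ∈ B₁ := by
    rintro x hx (h | h)
    exacts [h, absurd hx h]
  have hSB₁ := mem_iff_of_supp hSs
  have hpB : ∀ x ∈ B, p x ∈ B₁ := fun x hx =>
    DB _ ((iterate_mem_iff hgB' _ _).2 hx) (hτD x)
  -- `γ ∘ g` induces `S` on `B₁`; the transfer function outside `D` is prolonged from the place where
  -- the orbit will enter `B₁`
  refine ⟨γ, hSK.comp hRK.symm, hγs, fun x => u x + if x ∈ D then h x else h (γ (p x)), B', ?_,
    hB', hB'B, ?_, ?_, ?_⟩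
  · exact hu.comp₂ (lc_ite (lc_mem hD) hh (hh.comp_continuous (γ.continuous.comp hp))) (· + ·)
  · intro x hx
    have hxD : x ∈ D := Or.inl (hB'B hx)
    simp only [uD x hxD, hxD, if_true, h0 x hx, add_zero]
  · intro x hx
    have hgx := (hgB' x).2 hx
    by_cases hxD : x ∈ D <;> by_cases hgD : g x ∈ D
    all_goals dsimp only
    · have hx1 := DB x hx hxD
      have e : γ (g x) = S x := by rw [← hγ, hRD x hxD, pD _ hgD]
      have hSx : S x ∈ D := Or.inl ((hSB₁ x).2 hx1)
      obtain ⟨m, hm1, hm2, hm3, hm4⟩ := hret x hx1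
      have hm : m = 1 := by
        by_contra hne
        exact hm3 1 one_pos (by omega) (DB _ hgx hgD)
      rw [hm] at hm4
      simp only [Finset.range_one, Finset.sum_singleton, Function.iterate_zero, id] at hm4
      rw [e, uD x hxD, uD _ hSx, if_pos hxD, if_pos hSx]
      have := hcoc x hx1
      linarith
    · have hx1 := DB x hx hxD
      obtain ⟨m, hm1, hm2, hm3, hm4⟩ := hret x hx1
      have hm : m = τ (g x) + 1 := by
        obtain ⟨m, rfl⟩ := Nat.exists_eq_add_of_le' hm1
        rw [Function.iterate_succ_apply] at hm2
        have a1 : τ (g x) ≤ m := by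
          by_contra hlt
          exact hmin m (g x) (by omega) (Or.inl hm2)
        by_contra hne
        refine hm3 (τ (g x) + 1) (by omega) (by omega) ?_
        rw [Function.iterate_succ_apply]
        exact hpB _ hgx
      rw [hm, Finset.sum_range_succ'] at hm4
      simp only [Function.iterate_succ_apply, Function.iterate_zero, id] at hm4
      rw [hγD _ hgD, uD x hxD, if_pos hxD, if_neg hgD, ← hRD x hxD, hγ]
      have := hcoc x hx1
      have hu' : u (g x) = ∑ k ∈ Finset.range (τ (g x)), F (g^[k] (g x)) := rfl
      linarith
    · have hγg : γ (g x) ∈ D := Or.inl ((hγB₁ _).2 (DB _ hgx hgD))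
      rw [uD' x hxD, uD _ hgD, uD _ hγg, if_pos hγg, if_neg hxD, pD' x hxD, pD _ hgD]
      simp
    · rw [hγD _ hgD, uD' x hxD, if_neg hxD, if_neg hgD, pD' x hxD]
      linarith
  · set G : X → X := fun y => γ (g y) with hG
    have c1 : ∀ n x, x ∈ B → x ∉ D → τ x = n → ∃ k, G^[k] x = γ (p x) := by
      intro n
      induction n with
      | zero =>
        intro x hx hxD hτx
        have := hτ1 x hxD
        omega
      | succ n ih =>
        intro x hx hxD hτx
        rw [hτ1 x hxD] at hτx
        by_cases hgD : g x ∈ D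
        · exact ⟨1, by simp [hG, pD' x hxD, pD _ hgD]⟩
        · obtain ⟨k, hk⟩ := ih (g x) ((hgB' x).2 hx) hgD (by omega)
          exact ⟨k + 1, by rw [Function.iterate_succ_apply, pD' x hxD, ← hk, hG]; simp [hγD _ hgD]⟩
    have c2 : ∀ x ∈ B₁, ∃ k, G^[k] x = S x := by
      intro x hx
      have hxD : x ∈ D := Or.inl hx
      by_cases hgD : g x ∈ D
      · exact ⟨1, by simp only [hG, Function.iterate_one]; rw [← hγ, hRD x hxD, pD _ hgD]⟩
      · obtain ⟨k, hk⟩ := c1 _ (g x) ((hgB' x).2 (hBB hx)) hgD rfl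
        refine ⟨k + 1, ?_⟩
        rw [Function.iterate_succ_apply, ← hγ, hRD x hxD, ← hk, hG]
        simp [hγD _ hgD]
    have c3 : ∀ n x, x ∈ B₁ → ∃ k, G^[k] x = S^[n] x := by
      intro n
      induction n with
      | zero => exact fun x _ => ⟨0, rfl⟩
      | succ n ih =>
        intro x hx
        obtain ⟨k, hk⟩ := c2 x hx
        obtain ⟨l, hl⟩ := ih (S x) ((hSB₁ x).2 hx)
        exact ⟨l + k, by rw [Function.iterate_add_apply, hk, hl, Function.iterate_succ_apply]⟩
    have c4 : ∀ x ∈ B₁, ∃ k, G^[k] x ∈ B' := by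
      intro x hx
      obtain ⟨n, hn⟩ := hSrec x hx
      obtain ⟨k, hk⟩ := c3 n x hx
      exact ⟨k, by rwa [hk]⟩
    intro x hx
    by_cases hxD : x ∈ D
    · exact c4 x (DB x hx hxD)
    · obtain ⟨k, hk⟩ := c1 _ x hx hxD rfl
      obtain ⟨l, hl⟩ := c4 _ ((hγB₁ _).2 (hpB x hx))
      exact ⟨l + k, by rwa [Function.iterate_add_apply, hk]⟩

/-- `DynamicalSimplex.reduction` in terms of `Solv`: solvability for the map induced by `g` on `B₁`
implies solvability on `B`, as long as `F₁` is at most the sum of `F` up to the return to `B₁`. -/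
lemma DynamicalSimplex.solv_of_induced (hK : DynamicalSimplex K) {g : X ≃ₜ X}
    (hg : PreservesAll K g)
    {B B₁ : Set X} (hB : IsClopen B) (hB₁ : IsClopen B₁) (hBB : B₁ ⊆ B)
    (hgB : ∀ x ∉ B, g x = x) {F F₁ : X → ℤ} (hF : IsLocallyConstant F)
    (hrec : ∀ x ∈ B, ∃ k, g^[k] x ∈ B₁)
    (hret : ∀ x ∈ B₁, ∃ m, 1 ≤ m ∧ g^[m] x ∈ B₁ ∧ (∀ k, 0 < k → k < m → g^[k] x ∉ B₁) ∧
      F₁ x ≤ ∑ k ∈ Finset.range m, F (g^[k] x)) (hS : Solv K B₁ F₁) : Solv K B F := by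
  obtain ⟨γ, h1, h2, h, B', h3, h4, h5, h6, h7, h8⟩ :=
    hK.reduction hg hB hB₁ hBB hgB hF hrec hret hS
  refine ⟨g.trans γ, h1.comp hg, ?_, h, B', h3, h4, h5.trans hBB, h6, h7, h8⟩
  intro x hx
  simp only [Homeomorph.trans_apply, hgB x hx]
  exact h2 x fun h => hx (hBB h)

end ReturnMaps

end DynSimplex

/-! ### Division into cycles -/

namespace DynSimplex

section Division

variable {X : Type*} [TopologicalSpace X] [CompactSpace X] [TopologicalSpace.MetrizableSpace X]
  [TotallyDisconnectedSpace X] [MeasurableSpace X] [BorelSpace X]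
  {K : Set (ProbabilityMeasure X)}

/-- Approximate divisibility with the approximating inequality made strict. -/
lemma DynamicalSimplex.exists_strict_divisor (hK : DynamicalSimplex K) {B : Set X}
    (hB : IsClopen B) {κ : ℕ} (hκ : 1 ≤ κ) {ε : ℝ} (hε : 0 < ε) :
    ∃ Q : Set X, IsClopen Q ∧ (∀ μ ∈ K, (μ B : ℝ) - ε ≤ κ * (μ Q : ℝ)) ∧
      (Q = ∅ ∨ ∀ μ ∈ K, κ * (μ Q : ℝ) < μ B) := by
  have hκ0 : (0 : ℝ) < κ := by exact_mod_cast hκ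
  obtain ⟨Q, hQ, hQB, h⟩ := hK.2.2.2.2.2 B hB κ hκ (ε / 2) (by positivity)
  rcases Q.eq_empty_or_nonempty with rfl | ⟨x, hx⟩
  · refine ⟨∅, hQ, fun μ hμ => ?_, Or.inl rfl⟩
    have := (h μ hμ).1
    linarith
  · obtain ⟨A, hA, hxA, hAQ, hAμ⟩ := exists_small_clopen hK.2.1 (fun μ hμ => (hK.2.2.2.1 μ hμ).1) x
      hQ.isOpen hx (ε := ε / (2 * κ)) (by positivity)
    refine ⟨Q \ A, hQ.diff hA, fun μ hμ => ?_, Or.inr fun μ hμ => ?_⟩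
    · rw [pm_diff μ hAQ hA]
      have h1 := (h μ hμ).1
      have h2 := hAμ μ hμ
      rw [lt_div_iff₀ (by positivity)] at h2
      nlinarith
    · rw [pm_diff μ hAQ hA]
      have h1 := (h μ hμ).2
      have h2 := hK.pos hμ hA.isOpen ⟨x, hxA⟩
      nlinarith

/-- Almost all of `B` is divided into `κ` equivalent pieces; the value `κ` labels the rest. -/
lemma DynamicalSimplex.exists_label (hK : DynamicalSimplex K) {B : Set X}
    (hB : IsClopen B) {κ : ℕ} (hκ : 1 ≤ κ) {ε : ℝ} (hε : 0 < ε) :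
    ∃ (Q : Set X) (l : X → ℕ), IsLocallyConstant l ∧ (∀ x, l x ≤ κ) ∧
      (∀ i < κ, ∀ μ ∈ K, μ {x | x ∈ B ∧ l x = i} = μ Q) ∧
      ∀ μ ∈ K, (μ {x | x ∈ B ∧ l x = κ} : ℝ) ≤ ε := by
  classical
  obtain ⟨Q, hQ, h1, h2⟩ := hK.exists_strict_divisor hB hκ hε
  have key : ∀ n ≤ κ, ∃ l : X → ℕ, IsLocallyConstant l ∧ (∀ x, l x < n ∨ l x = κ) ∧
      (∀ i < n, ∀ μ ∈ K, μ {x | x ∈ B ∧ l x = i} = μ Q) ∧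
      ∀ μ ∈ K, (μ {x | x ∈ B ∧ l x = κ} : ℝ) = μ B - n * μ Q := by
    intro n
    induction n with
    | zero =>
      intro _
      exact ⟨fun _ => κ, IsLocallyConstant.const κ, fun x => Or.inr rfl, by simp, by simp⟩
    | succ n ih =>
      intro hn
      obtain ⟨l, hl, a1, a2, a3⟩ := ih (by omega)
      have hcl : IsClopen {x | x ∈ B ∧ l x = κ} := hB.inter (isClopen_preimage_of_lc hl {κ})
      obtain ⟨C, hC, hCB, hCμ⟩ : ∃ C, IsClopen C ∧ C ⊆ {x | x ∈ B ∧ l x = κ} ∧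
          ∀ μ ∈ K, μ C = μ Q := by
        rcases h2 with rfl | h2
        · exact ⟨∅, hQ, Set.empty_subset _, fun _ _ => rfl⟩
        · refine hK.2.2.2.2.1 Q _ hQ hcl fun μ hμ => ?_
          have b1 := a3 μ hμ
          have b2 := h2 μ hμ
          have b3 : ((n : ℝ) + 1) * μ Q ≤ κ * μ Q := by
            gcongr
            exact_mod_cast hn
          exact_mod_cast (by linarith : (μ Q : ℝ) < μ {x | x ∈ B ∧ l x = κ})
      refine ⟨fun x => if x ∈ C then n else l x, lc_ite (lc_mem hC) (IsLocallyConstant.const n) hl,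
        fun x => ?_, fun i hi μ hμ => ?_, fun μ hμ => ?_⟩
      · by_cases hx : x ∈ C
        · simp [hx]
        · simp only [hx, if_false]
          rcases a1 x with h | h <;> omega
      · rcases Nat.lt_succ_iff_lt_or_eq.1 hi with hi | rfl
        · rw [← a2 i hi μ hμ]
          congr 1
          ext x
          by_cases hx : x ∈ C
          · have := (hCB hx).2
            simp [hx]
            omega
          · simp [hx]
        · rw [← hCμ μ hμ]
          congr 1
          ext x
          by_cases hx : x ∈ C
          · simp [hx, (hCB hx).1]
          · simp [hx]
            rcases a1 x with h | h <;> omega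
      · have e : {x | x ∈ B ∧ (if x ∈ C then n else l x) = κ} = {x | x ∈ B ∧ l x = κ} \ C := by
          ext x
          by_cases hx : x ∈ C
          · simp [hx]; omega
          · simp [hx]
        rw [e, pm_diff μ hCB hC, a3 μ hμ, hCμ μ hμ]
        push_cast
        ring
  obtain ⟨l, hl, a1, a2, a3⟩ := key κ le_rfl
  refine ⟨Q, l, hl, fun x => ?_, a2, fun μ hμ => ?_⟩
  · rcases a1 x with h | h <;> omega
  · rw [a3 μ hμ]
    have := h1 μ hμ
    linarith

/-- Almost all of `B` is covered by `κ`-cycles of a `K`-preserving homeomorphism `σ`, with the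
locally constant function `F` being constant along cycles; `l` is the position in the cycle. -/
lemma DynamicalSimplex.division (hK : DynamicalSimplex K) {B : Set X} (hB : IsClopen B)
    {F : X → ℤ} (hF : IsLocallyConstant F) {κ : ℕ} (hκ : 1 ≤ κ) {ε : ℝ} (hε : 0 < ε) :
    ∃ (σ : X ≃ₜ X) (M : Set X) (l : X → ℕ), PreservesAll K σ ∧ IsClopen M ∧ M ⊆ B ∧
      IsLocallyConstant l ∧ (∀ x ∉ M, σ x = x) ∧
      (∀ x ∈ M, σ x ∈ M ∧ l x < κ ∧ l (σ x) = (l x + 1) % κ ∧ F (σ x) = F x) ∧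
      ∀ μ ∈ K, (μ (B \ M) : ℝ) < ε := by
  classical
  let T := hF.range_finite.toFinset
  let N : ℕ := T.card
  have hε' : 0 < ε / (N + 1) := by positivity
  choose Q l hl hlκ hlQ hlμ using fun a : ℤ =>
    hK.exists_label (hB.inter (isClopen_preimage_of_lc hF {a})) hκ hε'
  let L : X → ℕ := fun x => l (F x) x
  have hL : IsLocallyConstant L := lc_dep hF hl
  let M : Set X := {x | x ∈ B ∧ L x < κ}
  have hM : IsClopen M := hB.inter (isClopen_preimage_of_lc hL {n | n < κ})
  have hfib : ∀ a, ∀ i < κ, ∀ μ ∈ K, μ {x | x ∈ M ∧ L x = i ∧ F x = a} = μ (Q a) := by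
    intro a i hi μ hμ
    rw [← hlQ a i hi μ hμ]
    congr 1
    ext x
    simp only [M, L, Set.mem_ofPred_eq, Set.mem_inter_iff, Set.mem_preimage, Set.mem_singleton_iff]
    constructor
    · rintro ⟨⟨h1, h2⟩, h3, rfl⟩
      exact ⟨⟨h1, rfl⟩, h3⟩
    · rintro ⟨⟨h1, rfl⟩, h3⟩
      exact ⟨⟨h1, by omega⟩, h3, rfl⟩
  have hmod : ∀ n < κ, ∀ i < κ, ((n + 1) % κ = i ↔ n = if i = 0 then κ - 1 else i - 1) := by
    intro n hn i hi
    by_cases h : n + 1 = κ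
    · rw [h, Nat.mod_self]
      split_ifs <;> omega
    · rw [Nat.mod_eq_of_lt (by omega)]
      split_ifs <;> omega
  -- homogeneity provides a map raising the label by one modulo `κ` and preserving `F`
  obtain ⟨σ, hσ, hσM, hσ'⟩ := hK.homogeneousOn (P := fun x => ((L x + 1) % κ, F x))
    (Q := fun x => (L x, F x)) ((hL.comp fun n => (n + 1) % κ).prodMk hF) (hL.prodMk hF) hM (by
      rintro ⟨i, a⟩ μ hμ
      simp only [Prod.mk.injEq]
      by_cases hi : i < κ
      · rw [hfib a i hi μ hμ, ← hfib a (if i = 0 then κ - 1 else i - 1) (by split_ifs <;> omega)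
          μ hμ]
        congr 1
        ext x
        simp only [Set.mem_ofPred_eq]
        constructor
        · rintro ⟨h1, h2, h3⟩
          exact ⟨h1, (hmod _ h1.2 _ hi).1 h2, h3⟩
        · rintro ⟨h1, h2, h3⟩
          exact ⟨h1, (hmod _ h1.2 _ hi).2 h2, h3⟩
      · congr 1
        ext x
        simp only [Set.mem_ofPred_eq]
        constructor
        · rintro ⟨h1, h2, h3⟩
          have := Nat.mod_lt (L x + 1) (by omega : κ > 0)
          omega
        · rintro ⟨h1, h2, h3⟩
          have := h1.2
          omega)
  refine ⟨σ, M, L, hσ, hM, fun x hx => hx.1, hL, hσM, fun x hx => ?_, fun μ hμ => ?_⟩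
  · obtain ⟨h1, h2⟩ := hσ' x hx
    simp only [Prod.mk.injEq] at h2
    exact ⟨h1, hx.2, h2.1, h2.2⟩
  · have e : B \ M ⊆ ⋃ a ∈ T, {x | x ∈ B ∩ F ⁻¹' {a} ∧ l a x = κ} := by
      rintro x ⟨hxB, hxM⟩
      simp only [Set.mem_iUnion]
      refine ⟨F x, by simp [T], ⟨hxB, rfl⟩, ?_⟩
      have h1 := hlκ (F x) x
      have h2 : ¬ L x < κ := fun h => hxM ⟨hxB, h⟩
      have h3 : L x = l (F x) x := rfl
      omega
    have h1 : (μ (B \ M) : ℝ) ≤ ∑ a ∈ T, (μ {x | x ∈ B ∩ F ⁻¹' {a} ∧ l a x = κ} : ℝ) := by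
      refine (pm_mono μ e).trans ?_
      simpa using measureReal_biUnion_finset_le (μ := (μ : Measure X)) T
        (fun a => {x | x ∈ B ∩ F ⁻¹' {a} ∧ l a x = κ})
    have h2 : ∑ a ∈ T, (μ {x | x ∈ B ∩ F ⁻¹' {a} ∧ l a x = κ} : ℝ) ≤ N * (ε / (N + 1)) := by
      have := Finset.sum_le_card_nsmul T _ _ fun a _ => hlμ a μ hμ
      simpa [N] using this
    have h3 : N * (ε / (N + 1)) < ε := by
      rw [← mul_div_assoc, div_lt_iff₀ (by positivity)]
      nlinarith
    linarith

end Division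

end DynSimplex

/-! ### Solving the cohomological inequality -/

namespace DynSimplex

section Solve

lemma sum_mod_shift (f : ℕ → ℤ) (κ m : ℕ) :
    ∑ i ∈ Finset.range κ, f ((m + i) % κ) = ∑ i ∈ Finset.range κ, f i := by
  induction m with
  | zero =>
    refine Finset.sum_congr rfl fun i hi => ?_
    rw [zero_add, Nat.mod_eq_of_lt (Finset.mem_range.1 hi)]
  | succ m ih =>
    rw [← ih]
    have h1 := Finset.sum_range_succ (fun i => f ((m + i) % κ)) κ
    have h2 := Finset.sum_range_succ' (fun i => f ((m + i) % κ)) κ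
    have h3 : ∀ i, m + 1 + i = m + (i + 1) := fun i => by omega
    simp only [h3]
    rw [h1] at h2
    simp only [Nat.add_mod_right, add_zero] at h2
    linarith

lemma sum_lt_indicator {κ a : ℕ} (ha : a ≤ κ) :
    ∑ i ∈ Finset.range κ, (if i < a then (1 : ℤ) else 0) = a := by
  rw [← Finset.sum_filter]
  have : (Finset.range κ).filter (· < a) = Finset.range a := by
    ext i; simp; omega
  simp [this]

lemma sum_dvd_indicator (r j : ℕ) (hr : 0 < r) :
    ∑ i ∈ Finset.range (r * j), (if r ∣ i then (1 : ℤ) else 0) = j := by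
  rw [← Finset.sum_filter]
  have : (Finset.range (r * j)).filter (r ∣ ·) = (Finset.range j).image (r * ·) := by
    ext i
    simp only [Finset.mem_filter, Finset.mem_range, Finset.mem_image]
    constructor
    · rintro ⟨h1, k, rfl⟩
      exact ⟨k, Nat.lt_of_mul_lt_mul_left h1, rfl⟩
    · rintro ⟨k, hk, rfl⟩
      exact ⟨Nat.mul_lt_mul_of_pos_left hk hr, dvd_mul_right _ _⟩
  rw [this, Finset.sum_const, Finset.card_image_of_injective _
    (fun a b h => Nat.eq_of_mul_eq_mul_left hr h)]
  simp

variable {X : Type*} [TopologicalSpace X] [CompactSpace X] [TopologicalSpace.MetrizableSpace X]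
  [TotallyDisconnectedSpace X] [MeasurableSpace X] [BorelSpace X]
  {K : Set (ProbabilityMeasure X)}

lemma exists_bound_lc {F : X → ℤ} (hF : IsLocallyConstant F) : ∃ q : ℕ, 1 ≤ q ∧
    ∀ x, (F x).natAbs ≤ q := by
  obtain ⟨b, hb⟩ := (hF.range_finite.image Int.natAbs).bddAbove
  exact ⟨b + 1, by omega, fun x => (hb ⟨F x, ⟨x, rfl⟩, rfl⟩).trans (by omega)⟩

lemma integral_indicator_clopen (μ : ProbabilityMeasure X) {A : Set X} (hA : IsClopen A)
    [DecidablePred (· ∈ A)] :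
    ∫ x, (if x ∈ A then (1 : ℝ) else 0) ∂(μ : Measure X) = μ A := by
  have := integral_indicator_one (μ := (μ : Measure X)) (clopen_meas hA)
  rw [ProbabilityMeasure.measureReal_eq_coe_coeFn] at this
  rw [← this]
  congr 1
  ext x
  by_cases hx : x ∈ A <;> simp [hx]

lemma integral_iterate {g : X ≃ₜ X} (hg : PreservesAll K g) {μ : ProbabilityMeasure X}
    (hμ : μ ∈ K) (f : X → ℝ) (n : ℕ) :
    ∫ x, f (g^[n] x) ∂(μ : Measure X) = ∫ x, f x ∂(μ : Measure X) := by
  obtain ⟨h, h1, h2⟩ := hg.iter n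
  simp_rw [← h2]
  exact h1.integral_comp hμ f

lemma cycle_iterate {σ : X → X} {M : Set X} {l : X → ℕ} {F : X → ℤ} {κ : ℕ}
    (h : ∀ x ∈ M, σ x ∈ M ∧ l x < κ ∧ l (σ x) = (l x + 1) % κ ∧ F (σ x) = F x) (k : ℕ) :
    ∀ x ∈ M, σ^[k] x ∈ M ∧ l (σ^[k] x) = (l x + k) % κ ∧ F (σ^[k] x) = F x := by
  induction k with
  | zero =>
    intro x hx
    exact ⟨hx, by simp [Nat.mod_eq_of_lt (h x hx).2.1], rfl⟩
  | succ k ih =>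
    intro x hx
    obtain ⟨h1, -, h2, h3⟩ := h x hx
    obtain ⟨i1, i2, i3⟩ := ih (σ x) h1
    rw [Function.iterate_succ_apply]
    refine ⟨i1, ?_, i3.trans h3⟩
    rw [i2, h2, Nat.mod_add_mod]
    congr 1
    omega

lemma iterate_fixed {g : X → X} {x : X} (h : g x = x) (k : ℕ) : g^[k] x = x :=
  Function.iterate_fixed h k

/-- The data produced by dividing almost all of `B` into `κ`-cycles along which `F` is constant,
with `κ` a common multiple of the nonzero values of `F`; `M` is the union of the cycles and `l` the
position in the cycle. -/
structure Cycles (K : Set (ProbabilityMeasure X)) (B : Set X) (F : X → ℤ) where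
  κ : ℕ
  σ : X ≃ₜ X
  M : Set X
  l : X → ℕ
  κ_pos : 0 < κ
  dvd : ∀ x, F x ≠ 0 → (F x).natAbs ∣ κ
  hσ : PreservesAll K σ
  hB : IsClopen B
  hM : IsClopen M
  hMB : M ⊆ B
  hl : IsLocallyConstant l
  hF : IsLocallyConstant F
  fix : ∀ x ∉ M, σ x = x
  cyc : ∀ x ∈ M, σ x ∈ M ∧ l x < κ ∧ l (σ x) = (l x + 1) % κ ∧ F (σ x) = F x

namespace Cycles

variable {B : Set X} {F : X → ℤ} (c : Cycles K B F)

/-- The part of `B` where `F` is nonnegative. -/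
def nonneg (_ : Cycles K B F) : Set X := {x | x ∈ B ∧ 0 ≤ F x}

/-- Concentrated debts: in a cycle where `F = -j < 0`, every `(κ / j)`-th point; outside the
cycles, every point where `F < 0`. -/
def debt : Set X := {x | x ∈ B ∧ F x < 0 ∧ (x ∈ c.M → c.κ / (F x).natAbs ∣ c.l x)}

/-- Concentrated wealth: in a cycle where `F = a > 0`, the first `a` points. -/
def wealth : Set X := {x | x ∈ c.M ∧ 0 < F x ∧ (c.l x : ℤ) < F x}

lemma natAbs_le {x : X} : (F x).natAbs ≤ c.κ := by
  by_cases h : F x = 0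
  · simp [h]
  · exact Nat.le_of_dvd c.κ_pos (c.dvd x h)

lemma nonneg_clopen : IsClopen c.nonneg := c.hB.inter (isClopen_preimage_of_lc c.hF {n | 0 ≤ n})

lemma debt_clopen : IsClopen c.debt := by
  have h : IsLocallyConstant fun x => (x ∈ B, F x, x ∈ c.M, c.l x) :=
    (lc_mem c.hB).prodMk (c.hF.prodMk ((lc_mem c.hM).prodMk c.hl))
  exact isClopen_preimage_of_lc h
    {t | t.1 ∧ t.2.1 < 0 ∧ (t.2.2.1 → c.κ / t.2.1.natAbs ∣ t.2.2.2)}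

lemma wealth_clopen : IsClopen c.wealth := by
  have h : IsLocallyConstant fun x => (F x, x ∈ c.M, c.l x) :=
    c.hF.prodMk ((lc_mem c.hM).prodMk c.hl)
  exact isClopen_preimage_of_lc h {t | t.2.1 ∧ 0 < t.1 ∧ (t.2.2 : ℤ) < t.1}

lemma iter (k : ℕ) {x : X} (hx : x ∈ c.M) :
    c.σ^[k] x ∈ c.M ∧ c.l (c.σ^[k] x) = (c.l x + k) % c.κ ∧ F (c.σ^[k] x) = F x :=
  cycle_iterate c.cyc k x hx

lemma iter_fix (k : ℕ) {x : X} (hx : x ∉ c.M) : c.σ^[k] x = x :=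
  iterate_fixed (c.fix x hx) k

lemma wealth_sub : c.wealth ⊆ c.nonneg := fun _ hx => ⟨c.hMB hx.1, hx.2.1.le⟩

lemma disj {x : X} (hx : x ∈ c.debt) : x ∉ c.nonneg := fun h => not_lt.2 h.2 hx.2.1

open Classical in
/-- Over each cycle, the wealth minus the debt adds up to the common value of `F`. -/
lemma sum_cycle {x : X} (hx : x ∈ c.M) :
    ∑ k ∈ Finset.range c.κ, ((if c.σ^[k] x ∈ c.wealth then (1 : ℤ) else 0)
      - if c.σ^[k] x ∈ c.debt then 1 else 0) = F x := by
  have hB : ∀ k, c.σ^[k] x ∈ B := fun k => c.hMB (c.iter k hx).1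
  rcases lt_trichotomy (F x) 0 with h | h | h
  · obtain ⟨r, hr⟩ := c.dvd x h.ne
    set j := (F x).natAbs with hj
    have hj0 : 0 < j := by omega
    have hr0 : 0 < r := by
      rcases Nat.eq_zero_or_pos r with h0 | h0
      · have := c.κ_pos
        simp [hr, h0] at this
      · exact h0
    have hdiv : c.κ / j = r := by rw [hr]; exact Nat.mul_div_cancel_left r hj0
    have e : ∀ k, ((if c.σ^[k] x ∈ c.wealth then (1 : ℤ) else 0)
        - if c.σ^[k] x ∈ c.debt then 1 else 0) = - if r ∣ (c.l x + k) % c.κ then 1 else 0 := by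
      intro k
      obtain ⟨i1, i2, i3⟩ := c.iter k hx
      have a1 : c.σ^[k] x ∉ c.wealth := fun hw => by
        have := hw.2.1
        omega
      have a2 : c.σ^[k] x ∈ c.debt ↔ r ∣ (c.l x + k) % c.κ := by
        simp only [debt, Set.mem_ofPred_eq, i1, i2, i3, ← hj, hdiv, hB k, h]
        simp
      simp [a1, a2]
    simp only [e, Finset.sum_neg_distrib]
    rw [sum_mod_shift (fun n => if r ∣ n then 1 else 0), hr, mul_comm j r,
      sum_dvd_indicator r j hr0]
    omega
  · rw [h]
    refine Finset.sum_eq_zero fun k _ => ?_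
    obtain ⟨i1, i2, i3⟩ := c.iter k hx
    rw [if_neg, if_neg, sub_zero]
    · intro hw
      have := hw.2.1
      omega
    · intro hw
      have := hw.2.1
      omega
  · have e : ∀ k, ((if c.σ^[k] x ∈ c.wealth then (1 : ℤ) else 0)
        - if c.σ^[k] x ∈ c.debt then 1 else 0) =
          if (c.l x + k) % c.κ < (F x).natAbs then 1 else 0 := by
      intro k
      obtain ⟨i1, i2, i3⟩ := c.iter k hx
      have a1 : c.σ^[k] x ∉ c.debt := fun hw => by
        have := hw.2.1
        omega
      have a2 : c.σ^[k] x ∈ c.wealth ↔ (c.l x + k) % c.κ < (F x).natAbs := by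
        simp only [wealth, Set.mem_ofPred_eq, i1, i2, i3, h, true_and]
        omega
      simp [a1, a2]
    simp only [e]
    rw [sum_mod_shift (fun n => if n < (F x).natAbs then 1 else 0), sum_lt_indicator c.natAbs_le]
    omega

open Classical in
/-- On the nonnegative part, the function `F` lowered by `κ` on the wealthy points can be
solved. -/
lemma solv_nonneg (hK : DynamicalSimplex K) :
    Solv K c.nonneg (fun x => F x - if x ∈ c.wealth then (c.κ : ℤ) else 0) := by
  let A : Set X := {x | x ∈ c.M ∧ 0 < F x}
  have hA : IsClopen A := c.hM.inter (isClopen_preimage_of_lc c.hF {n | 0 < n})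
  have hcA : ∀ x ∈ c.M, (c.σ x ∈ A ↔ x ∈ A) := fun x hx => by
    obtain ⟨h1, -, -, h2⟩ := c.cyc x hx
    simp [A, h1, h2, hx]
  obtain ⟨s, hs, hsA, hsA'⟩ := exists_restrict c.hσ hA (fun x => by
    by_cases hx : x ∈ c.M
    · exact hcA x hx
    · rw [c.fix x hx])
  have it : ∀ k x, x ∈ A → s^[k] x = c.σ^[k] x := by
    intro k
    induction k with
    | zero => exact fun x _ => rfl
    | succ k ih =>
      intro x hx
      rw [Function.iterate_succ_apply, Function.iterate_succ_apply, hsA x hx, ih]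
      exact (hcA x hx.1).2 hx
  -- inducing on the starting points of the cycles, where the sum over a whole cycle vanishes
  let B₃ : Set X := {x | x ∈ c.nonneg ∧ (x ∈ A → c.l x = 0)}
  have hB₃ : IsClopen B₃ := by
    have h : IsLocallyConstant fun x => (x ∈ c.nonneg, x ∈ A, c.l x) :=
      (lc_mem c.nonneg_clopen).prodMk ((lc_mem hA).prodMk c.hl)
    exact isClopen_preimage_of_lc h {t | t.1 ∧ (t.2.1 → t.2.2 = 0)}
  have hAn : ∀ x ∈ A, x ∈ c.nonneg := fun x hx => ⟨c.hMB hx.1, hx.2.le⟩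
  have hAi : ∀ k x, x ∈ A → c.σ^[k] x ∈ A := fun k x hx => by
    obtain ⟨i1, i2, i3⟩ := c.iter k hx.1
    exact ⟨i1, by rw [i3]; exact hx.2⟩
  refine hK.solv_of_induced hs c.nonneg_clopen hB₃ (fun x hx => hx.1)
    (fun x hx => hsA' x fun h => hx (hAn x h))
    (c.hF.comp₂ (lc_ite (lc_mem c.wealth_clopen) (IsLocallyConstant.const _)
      (IsLocallyConstant.const _)) (· - ·)) (F₁ := fun _ => 0) ?_ ?_
    ⟨Homeomorph.refl X, PreservesAll.refl, fun _ _ => rfl, fun _ => 0, B₃,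
      IsLocallyConstant.const _, hB₃, le_rfl, fun _ _ => rfl, fun _ _ => by simp,
      fun x hx => ⟨0, hx⟩⟩
  · intro x hx
    by_cases hxA : x ∈ A
    · refine ⟨c.κ - c.l x, ?_⟩
      rw [it _ x hxA]
      refine ⟨hAn _ (hAi _ x hxA), fun _ => ?_⟩
      rw [(c.iter _ hxA.1).2.1, Nat.add_sub_cancel' (c.cyc x hxA.1).2.1.le, Nat.mod_self]
    · exact ⟨0, hx, fun h => absurd h hxA⟩
  · intro x hx
    by_cases hxA : x ∈ A
    · have hl0 := hx.2 hxA
      refine ⟨c.κ, c.κ_pos, ?_, ?_, ?_⟩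
      · rw [it _ x hxA]
        refine ⟨hAn _ (hAi _ x hxA), fun _ => ?_⟩
        rw [(c.iter _ hxA.1).2.1, hl0]
        simp
      · intro k hk hk' hkB
        rw [it _ x hxA] at hkB
        have := hkB.2 (hAi _ x hxA)
        rw [(c.iter _ hxA.1).2.1, hl0, zero_add, Nat.mod_eq_of_lt hk'] at this
        omega
      · have h1 := c.sum_cycle hxA.1
        have e : ∀ k, (F (s^[k] x) - if s^[k] x ∈ c.wealth then (c.κ : ℤ) else 0) =
            F x - c.κ * ((if c.σ^[k] x ∈ c.wealth then (1 : ℤ) else 0)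
              - if c.σ^[k] x ∈ c.debt then 1 else 0) := by
          intro k
          have hd : c.σ^[k] x ∉ c.debt := fun h => c.disj h (hAn _ (hAi _ x hxA))
          rw [it _ x hxA, (c.iter k hxA.1).2.2, if_neg hd]
          by_cases hw : c.σ^[k] x ∈ c.wealth <;> simp [hw]
        simp only [e]
        rw [Finset.sum_sub_distrib, ← Finset.mul_sum, h1]
        simp
    · refine ⟨1, le_rfl, ?_, fun k h1 h2 => by omega, ?_⟩
      · simpa [hsA' x hxA] using hx
      · have hw : x ∉ c.wealth := fun h => hxA ⟨h.1, h.2.1⟩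
        simpa [hw] using hx.1.2

/-- If the debts can be injected into the wealth, then `F` can be solved on `B`: the debts are
concentrated along the cycles, and then each of them is paid by a wealthy point. -/
lemma solv (hK : DynamicalSimplex K) {C : Set X} (hC : IsClopen C) (hCW : C ⊆ c.wealth)
    (hCD : ∀ μ ∈ K, μ C = μ c.debt) : Solv K B F := by
  classical
  have hdisj : ∀ x ∈ C, x ∉ c.debt := fun x hx hd => c.disj hd (c.wealth_sub (hCW hx))
  -- an element exchanging `C` and the debts
  obtain ⟨φ, hφ, hφs, hφA⟩ := hK.homogeneousOn (P := fun x => x ∈ C) (Q := fun x => x ∈ c.debt)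
    (lc_mem hC) (lc_mem c.debt_clopen) (hC.union c.debt_clopen) (by
      have e1 : {x | x ∈ C ∪ c.debt ∧ x ∈ C} = C := by
        ext x; simp
      have e2 : {x | x ∈ C ∪ c.debt ∧ x ∈ c.debt} = c.debt := by
        ext x; simp
      have e3 : {x | x ∈ C ∪ c.debt ∧ x ∉ C} = c.debt := by
        ext x
        have := hdisj x
        simp
        tauto
      have e4 : {x | x ∈ C ∪ c.debt ∧ x ∉ c.debt} = C := by
        ext x
        have := hdisj x
        simp
        tauto
      intro i μ hμ
      by_cases hi : i
      · simp only [hi, eq_iff_iff, iff_true]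
        rw [e1, e2, hCD μ hμ]
      · simp only [hi, eq_iff_iff, iff_false]
        rw [e3, e4, hCD μ hμ])
  have hφC : ∀ x ∈ C, φ x ∈ c.debt := fun x hx => by
    have := (hφA x (Or.inl hx)).2
    simpa [hx] using this
  have hφD : ∀ x ∈ c.debt, φ x ∈ C := fun x hx => by
    obtain ⟨h1, h2⟩ := hφA x (Or.inr hx)
    have hxC : x ∉ C := fun h => hdisj x h hx
    rcases h1 with h1 | h1
    · exact h1
    · exact absurd (h2.mp h1) hxC
  have hn := c.nonneg_clopen
  have hd := c.debt_clopen
  -- inducing on the nonnegative part: a point of `C` pays the debt `κ` of its image under `φ`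
  have h2 : Solv K (c.nonneg ∪ c.debt) (fun x => if x ∈ c.debt then -(c.κ : ℤ) else F x) := by
    refine hK.solv_of_induced hφ (hn.union hd) hn Set.subset_union_left ?_
      (lc_ite (lc_mem hd) (IsLocallyConstant.const _) c.hF) ?_ ?_ (c.solv_nonneg hK)
    · intro x hx
      refine hφs x ?_
      rintro (h | h)
      · exact hx (Or.inl (c.wealth_sub (hCW h)))
      · exact hx (Or.inr h)
    · rintro x (hx | hx)
      · exact ⟨0, hx⟩
      · exact ⟨1, c.wealth_sub (hCW (hφD x hx))⟩
    · intro x hx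
      have hxd : x ∉ c.debt := fun h => c.disj h hx
      by_cases hxC : x ∈ C
      · refine ⟨2, by omega, c.wealth_sub (hCW (hφD _ (hφC x hxC))), ?_, ?_⟩
        · intro k k1 k2
          obtain rfl : k = 1 := by omega
          exact c.disj (hφC x hxC)
        · simp [Finset.sum_range_succ, hxd, hφC x hxC, hCW hxC]
      · have hfix : φ x = x := hφs x (by rintro (h | h); exacts [hxC h, hxd h])
        refine ⟨1, le_rfl, by simpa [hfix] using hx, fun k h1 h2 => by omega, ?_⟩
        simp [hxd]
        split_ifs <;> simp
  have hquot : ∀ x, F x < 0 → ∃ r : ℕ, 0 < r ∧ c.κ / (F x).natAbs = r ∧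
      (c.κ : ℤ) = -F x * r ∧ r ∣ c.κ := by
    intro x hx
    obtain ⟨r, hr⟩ := c.dvd x hx.ne
    have hj0 : 0 < (F x).natAbs := by omega
    refine ⟨r, ?_, ?_, ?_, ⟨_, by rw [mul_comm]; exact hr⟩⟩
    · rcases Nat.eq_zero_or_pos r with h0 | h0
      · have := c.κ_pos
        simp [hr, h0] at this
      · exact h0
    · rw [hr]; exact Nat.mul_div_cancel_left r hj0
    · rw [hr]
      push_cast
      rw [abs_of_neg hx]
  have hdi : ∀ x ∈ c.M, F x < 0 → ∀ r, c.κ / (F x).natAbs = r → r ∣ c.κ → ∀ k,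
      (c.σ^[k] x ∈ c.nonneg ∪ c.debt ↔ r ∣ c.l x + k) := by
    intro x hx hx0 r hr hrd k
    obtain ⟨i1, i2, i3⟩ := c.iter k hx
    have : c.σ^[k] x ∉ c.nonneg := fun h => by
      have := h.2
      omega
    simp only [Set.mem_union, this, false_or, debt, Set.mem_ofPred_eq, i1, i2, i3, hr, c.hMB i1,
      hx0, true_and, true_imp_iff]
    exact Nat.dvd_mod_iff hrd
  -- inducing on the debts: the sum of `F = -j` between consecutive debts is `-j * (κ / j) = -κ`
  refine hK.solv_of_induced c.hσ c.hB (hn.union hd) ?_ ?_ c.hF ?_ ?_ h2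
  · rintro x (h | h)
    exacts [h.1, h.1]
  · exact fun x hx => c.fix x fun h => hx (c.hMB h)
  · intro x hx
    by_cases h0 : 0 ≤ F x
    · exact ⟨0, Or.inl ⟨hx, h0⟩⟩
    · by_cases hxM : x ∈ c.M
      · obtain ⟨r, hr0, hr1, hr2, hr3⟩ := hquot x (by omega)
        refine ⟨r - c.l x % r, (hdi x hxM (by omega) r hr1 hr3 _).2 ?_⟩
        have h1 := Nat.mod_lt (c.l x) hr0
        have h2 := Nat.div_add_mod (c.l x) r
        refine ⟨c.l x / r + 1, ?_⟩
        rw [mul_add, mul_one]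
        omega
      · exact ⟨0, Or.inr ⟨hx, not_le.1 h0, fun h => absurd h hxM⟩⟩
  · intro x hx
    by_cases hxM : x ∈ c.M
    · by_cases h0 : 0 ≤ F x
      · have hxd : x ∉ c.debt := fun h => by
          have := h.2.1
          omega
        obtain ⟨i1, -, -, i2⟩ := c.cyc x hxM
        refine ⟨1, le_rfl, Or.inl ⟨c.hMB i1, by simpa [i2] using h0⟩, fun k h1 h2 => by omega, ?_⟩
        simp [hxd]
      · obtain ⟨r, hr0, hr1, hr2, hr3⟩ := hquot x (by omega)
        have hd' := hdi x hxM (by omega) r hr1 hr3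
        have hxr : r ∣ c.l x := by simpa using (hd' 0).1 hx
        refine ⟨r, hr0, (hd' r).2 (Dvd.dvd.add hxr dvd_rfl), ?_, ?_⟩
        · intro k h1 h2 h3
          have := (Nat.dvd_add_right hxr).1 ((hd' k).1 h3)
          exact absurd (Nat.le_of_dvd h1 this) (by omega)
        · have hxd : x ∈ c.debt := by
            rcases hx with hx | hx
            · exact absurd hx.2 h0
            · exact hx
          simp only [(c.iter _ hxM).2.2, hxd, if_true]
          simp only [Finset.sum_const, Finset.card_range, nsmul_eq_mul]
          rw [hr2]
          linarith
    · refine ⟨1, le_rfl, by simpa [c.fix x hxM] using hx, fun k h1 h2 => by omega, ?_⟩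
      have := c.natAbs_le (x := x)
      simp
      split_ifs <;> omega

end Cycles

/-- A locally constant function on `B` with positive integral for all `μ ∈ K` can be solved. -/
theorem DynamicalSimplex.solve (hK : DynamicalSimplex K) {B : Set X} (hB : IsClopen B)
    {F : X → ℤ} (hF : IsLocallyConstant F) (hF0 : ∀ x ∉ B, F x = 0)
    (hpos : ∀ μ ∈ K, 0 < ∫ x, (F x : ℝ) ∂(μ : Measure X)) : Solv K B F := by
  classical
  obtain ⟨q, hq1, hq⟩ := exists_bound_lc hF
  obtain ⟨δ, hδ, hδF⟩ := exists_pos_lb hK.2.1 (continuous_integral_lc hF) hpos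
  -- every nonzero value of `F` divides `q!`
  let κ := q.factorial
  have hκ : 0 < κ := Nat.factorial_pos q
  obtain ⟨σ, M, l, hσ, hM, hMB, hl, hfix, hcyc, hε⟩ :=
    hK.division hB hF (κ := κ) hκ (ε := δ / (κ + q + 1)) (by positivity)
  let c : Cycles K B F := ⟨κ, σ, M, l, hκ, fun x hx => Nat.dvd_factorial (by omega) (hq x), hσ, hB,
    hM, hMB, hl, hF, hfix, hcyc⟩
  have hlt : ∀ μ ∈ K, μ c.debt < μ c.wealth := by
    intro μ hμ
    let E : X → ℤ := fun x => (if x ∈ c.wealth then (1 : ℤ) else 0) - if x ∈ c.debt then 1 else 0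
    have hw := lc_ite (lc_mem c.wealth_clopen) (IsLocallyConstant.const (1 : ℤ))
      (IsLocallyConstant.const 0)
    have hd := lc_ite (lc_mem c.debt_clopen) (IsLocallyConstant.const (1 : ℤ))
      (IsLocallyConstant.const 0)
    have hE : IsLocallyConstant E := hw.comp₂ hd (· - ·)
    have hBM : IsLocallyConstant fun x => if x ∈ B \ M then (1 : ℤ) else 0 :=
      lc_ite (lc_mem (hB.diff hM)) (IsLocallyConstant.const 1) (IsLocallyConstant.const 0)
    -- on the cycles equality holds; the points of `B \ M` contribute an error of at most `κ + q`
    have hpt : ∀ x, F x ≤ ∑ k ∈ Finset.range κ, E (σ^[k] x) +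
        (κ + q) * (if x ∈ B \ M then (1 : ℤ) else 0) := by
      intro x
      by_cases hxM : x ∈ M
      · have := c.sum_cycle (x := x) hxM
        simp only [hxM, Set.mem_sdiff, not_true, and_false, if_false, mul_zero, add_zero]
        exact this.ge
      · have hit : ∀ k, σ^[k] x = x := fun k => c.iter_fix k hxM
        have hxw : x ∉ c.wealth := fun h => hxM h.1
        simp only [hit, E, hxw, if_false, Finset.sum_const, Finset.card_range, nsmul_eq_mul]
        by_cases hxB : x ∈ B
        · have := hq x
          simp only [Set.mem_sdiff, hxB, hxM, not_false_iff, and_self, if_true]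
          split_ifs <;> · simp; omega
        · have hxd : x ∉ c.debt := fun h => hxB h.1
          simp [hF0 x hxB, hxd, hxB]
    have hintegral : ∫ x, (F x : ℝ) ∂(μ : Measure X) ≤
        κ * ((μ c.wealth : ℝ) - μ c.debt) + (κ + q) * μ (B \ M) := by
      have i1 : ∀ k, ∫ x, (E (σ^[k] x) : ℝ) ∂(μ : Measure X) = (μ c.wealth : ℝ) - μ c.debt := by
        intro k
        rw [integral_iterate hσ hμ (fun x => (E x : ℝ)) k]
        simp only [E, Int.cast_sub, Int.cast_ite, Int.cast_one, Int.cast_zero]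
        rw [integral_sub, integral_indicator_clopen μ c.wealth_clopen,
          integral_indicator_clopen μ c.debt_clopen]
        · simpa using integrable_lc (μ := μ) hw
        · simpa using integrable_lc (μ := μ) hd
      have j1 : ∀ k, Integrable (fun x => (E (σ^[k] x) : ℝ)) (μ : Measure X) := fun k =>
        integrable_lc (hE.comp_continuous (σ.continuous.iterate k))
      have j2 : Integrable (fun x => if x ∈ B \ M then (1 : ℝ) else 0) (μ : Measure X) := by
        simpa using integrable_lc (μ := μ) hBM
      have : ∫ x, (F x : ℝ) ∂(μ : Measure X) ≤ ∫ x, (∑ k ∈ Finset.range κ, (E (σ^[k] x) : ℝ) +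
          (κ + q) * (if x ∈ B \ M then (1 : ℝ) else 0)) ∂(μ : Measure X) := by
        refine integral_mono (integrable_lc hF) ?_ fun x => ?_
        · exact (integrable_finsetSum _ fun k _ => j1 k).add (j2.const_mul _)
        · have := hpt x
          have h2 : ((F x : ℤ) : ℝ) ≤ ((∑ k ∈ Finset.range κ, E (σ^[k] x) +
            (κ + q) * (if x ∈ B \ M then (1 : ℤ) else 0) : ℤ) : ℝ) := Int.cast_le.2 this
          push_cast at h2
          exact h2
      refine this.trans_eq ?_
      rw [integral_add (integrable_finsetSum _ fun k _ => j1 k) (j2.const_mul _),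
        integral_finsetSum _ fun k _ => j1 k, integral_const_mul,
        integral_indicator_clopen μ (hB.diff hM)]
      simp only [i1]
      simp [mul_sub]
    have h1 := hδF μ hμ
    have h2 := hε μ hμ
    rw [lt_div_iff₀ (by positivity)] at h2
    have h3 : (0 : ℝ) < κ * ((μ c.wealth : ℝ) - μ c.debt) := by
      have : (0 : ℝ) ≤ μ (B \ M) := NNReal.coe_nonneg _
      nlinarith
    have h4 : (0 : ℝ) < (μ c.wealth : ℝ) - μ c.debt := by
      refine pos_of_mul_pos_right h3 (by positivity)
    exact_mod_cast sub_pos.1 h4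
  obtain ⟨C, hC, hCW, hCμ⟩ := hK.2.2.2.2.1 _ _ c.debt_clopen c.wealth_clopen hlt
  exact c.solv hK hC hCW hCμ

end Solve

end DynSimplex

/-! ### Modifying a homeomorphism inside a clopen set -/

namespace DynSimplex

section Steps

variable {X : Type*} [TopologicalSpace X] [CompactSpace X] [TopologicalSpace.MetrizableSpace X]
  [TotallyDisconnectedSpace X] [MeasurableSpace X] [BorelSpace X]
  {K : Set (ProbabilityMeasure X)}

/-- If `g` visits `B` recurrently and `f` has positive integrals, then `g` can be modified in `B` so
that `f` becomes cohomologous to a nonnegative function. -/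
theorem DynamicalSimplex.modify (hK : DynamicalSimplex K) {g : X ≃ₜ X} (hg : PreservesAll K g)
    {B : Set X} (hB : IsClopen B) (hrec : ∀ x, ∃ k, g^[k] x ∈ B) {f : X → ℤ}
    (hf : IsLocallyConstant f) (hpos : ∀ μ ∈ K, 0 < ∫ x, (f x : ℝ) ∂(μ : Measure X)) :
    ∃ γ : X ≃ₜ X, PreservesAll K γ ∧ (∀ x ∉ B, γ x = x) ∧ ∃ (h : X → ℤ) (B' : Set X),
      IsLocallyConstant h ∧ IsClopen B' ∧ B' ⊆ B ∧ (∀ x ∈ B', h x = 0) ∧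
      (∀ x, 0 ≤ f x + h (γ (g x)) - h x) ∧ ∀ x, ∃ k, (fun y => γ (g y))^[k] x ∈ B' := by
  classical
  obtain ⟨τ, hτ, hτB, hτ0, hτ1⟩ := exists_hit g.continuous hB hrec
  have hmin := hit_min hτ1 hτ0
  let u : X → ℤ := fun x => ∑ k ∈ Finset.range (τ x), f (g^[k] x)
  have hu : IsLocallyConstant u := lc_dep hτ
    (f := fun n x => ∑ k ∈ Finset.range n, f (g^[k] x))
    fun n => lc_sum (fun k => hf.comp_continuous (g.continuous.iterate k)) n
  have uD : ∀ x ∈ B, u x = 0 := fun x hx => by simp [u, hτ0 x hx]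
  have uD' : ∀ x ∉ B, u x = f x + u (g x) := fun x hx => by
    simp only [u, hτ1 x hx, Finset.sum_range_succ', Function.iterate_succ_apply]
    simp [add_comm]
  -- on `B`, the sum of `f` up to the first return to `B`; zero elsewhere
  let F : X → ℤ := fun x => f x + u (g x) - u x
  have hug : IsLocallyConstant fun x => u (g x) := hu.comp_continuous g.continuous
  have hF : IsLocallyConstant F := (hf.comp₂ hug (· + ·)).comp₂ hu (· - ·)
  have hintegral : ∀ μ ∈ K, ∫ x, (F x : ℝ) ∂(μ : Measure X) = ∫ x, (f x : ℝ) ∂(μ : Measure X) := by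
    intro μ hμ
    have i1 := integrable_lc (μ := μ) hf
    have i2 := integrable_lc (μ := μ) hu
    have i3 := integrable_lc (μ := μ) hug
    simp only [F, Int.cast_sub, Int.cast_add]
    have i4 : Integrable (fun x => (f x : ℝ) + (u (g x) : ℝ)) (μ : Measure X) := i1.add i3
    rw [integral_sub i4 i2, integral_add i1 i3,
      hg.integral_comp hμ (fun x => (u x : ℝ))]
    ring
  have hS : Solv K B F := hK.solve hB hF (fun x hx => by simp [F, uD' x hx])
    fun μ hμ => by rw [hintegral μ hμ]; exact hpos μ hμ
  obtain ⟨γ, h1, h2, h, B', h3, h4, h5, h6, h7, h8⟩ := hK.reduction hg isClopen_univ hB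
    (Set.subset_univ _) (by simp) hf (fun x _ => hrec x) (F₁ := F) (fun x hx =>
      ⟨τ (g x) + 1, by omega, by rw [Function.iterate_succ_apply]; exact hτB _, fun k k1 k2 => by
        obtain ⟨k, rfl⟩ := Nat.exists_eq_add_of_le' (Nat.succ_le_of_lt k1)
        rw [Nat.succ_eq_add_one, zero_add, Function.iterate_succ_apply]
        exact hmin k (g x) (by omega), by
        rw [Finset.sum_range_succ']
        simp only [Function.iterate_succ_apply, Function.iterate_zero, id]
        simp only [F, uD x hx]
        have : u (g x) = ∑ k ∈ Finset.range (τ (g x)), f (g^[k] (g x)) := rfl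
        linarith⟩) hS
  exact ⟨γ, h1, h2, h, B', h3, h4, h5, h6, fun x => h7 x trivial, fun x => h8 x trivial⟩

/-- A coboundary bound forces all orbits to visit `U`. -/
lemma hits_of_cob {g : X → X} {U : Set X} [DecidablePred (· ∈ U)] {h : X → ℤ}
    (hh : IsLocallyConstant h) (M : ℤ)
    (hc : ∀ x, 0 ≤ (M * (if x ∈ U then 1 else 0) - 1) + h (g x) - h x) (x : X) :
    ∃ k, g^[k] x ∈ U := by
  by_contra hno
  push Not at hno
  have key : ∀ n : ℕ, h x + n ≤ h (g^[n] x) := by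
    intro n
    induction n with
    | zero => simp
    | succ n ih =>
      have := hc (g^[n] x)
      rw [if_neg (hno n)] at this
      rw [Function.iterate_succ_apply']
      push_cast
      linarith
  obtain ⟨q, -, hq⟩ := exists_bound_lc hh
  have h1 := key (2 * q + 1)
  have h2 := hq x
  have h3 := hq (g^[2 * q + 1] x)
  push_cast at h1
  omega

/-- Recurrence to `B` is not affected by modifications inside `B`. -/
lemma rec_modify {g : X → X} {γ : X ≃ₜ X} {B : Set X} (hγ : ∀ x ∉ B, γ x = x)
    (h : ∀ x, ∃ k, g^[k] x ∈ B) (x : X) : ∃ k, (fun y => γ (g y))^[k] x ∈ B := by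
  obtain ⟨k, hk⟩ := h x
  induction k generalizing x with
  | zero => exact ⟨0, hk⟩
  | succ k ih =>
    by_cases hg : g x ∈ B
    · exact ⟨1, (mem_iff_of_supp hγ _).2 hg⟩
    · rw [Function.iterate_succ_apply] at hk
      obtain ⟨l, hl⟩ := ih (g x) hk
      refine ⟨l + 1, ?_⟩
      rw [Function.iterate_succ_apply]
      simpa [hγ _ hg] using hl

/-- Given a nonempty clopen set `U`, some multiple of its indicator has integrals larger than
`1`. -/
lemma DynamicalSimplex.exists_multiple (hK : DynamicalSimplex K) {U : Set X} (hU : IsClopen U)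
    (hne : U.Nonempty) [DecidablePred (· ∈ U)] : ∃ M : ℤ,
      IsLocallyConstant (fun x => M * (if x ∈ U then 1 else 0) - 1) ∧
      ∀ μ ∈ K, 0 < ∫ x, ((M * (if x ∈ U then 1 else 0) - 1 : ℤ) : ℝ) ∂(μ : Measure X) := by
  obtain ⟨δ, hδ, hδU⟩ := exists_pos_lb hK.2.1 (continuous_pm hU)
    (fun μ hμ => hK.pos hμ hU.isOpen hne)
  obtain ⟨M, hM⟩ := exists_nat_gt (1 / δ)
  rw [div_lt_iff₀ hδ] at hM
  have hlc : IsLocallyConstant (fun x => if x ∈ U then (1 : ℤ) else 0) :=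
    lc_ite (lc_mem hU) (IsLocallyConstant.const 1) (IsLocallyConstant.const 0)
  refine ⟨M, hlc.comp fun n => (M : ℤ) * n - 1, fun μ hμ => ?_⟩
  have hi : Integrable (fun x => if x ∈ U then (1 : ℝ) else 0) (μ : Measure X) := by
    simpa using integrable_lc (μ := μ) hlc
  push_cast
  rw [integral_sub (hi.const_mul _) (integrable_const _), integral_const_mul,
    integral_indicator_clopen μ hU]
  simp only [integral_const, probReal_univ, smul_eq_mul, mul_one]
  have := hδU μ hμ
  nlinarith

/-- Every nonempty clopen set `B` carries a `K`-preserving homeomorphism supported in `B` and moving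
a point. -/
lemma DynamicalSimplex.exists_moving (hK : DynamicalSimplex K) {B : Set X} (hB : IsClopen B)
    (hne : B.Nonempty) : ∃ σ : X ≃ₜ X, PreservesAll K σ ∧ (∀ x ∉ B, σ x = x) ∧
      ∃ x ∈ B, σ x ≠ x := by
  obtain ⟨δ, hδ, hδB⟩ := exists_pos_lb hK.2.1 (continuous_pm hB)
    (fun μ hμ => hK.pos hμ hB.isOpen hne)
  obtain ⟨σ, M, l, hσ, hM, hMB, hl, hfix, hcyc, hε⟩ :=
    hK.division hB (IsLocallyConstant.const (0 : ℤ)) (κ := 2) (by omega) hδ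
  obtain ⟨μ, hμ⟩ := hK.1
  have hMne : M.Nonempty := by
    by_contra hM0
    rw [Set.not_nonempty_iff_eq_empty] at hM0
    have h1 := hε μ hμ
    have h2 := hδB μ hμ
    rw [hM0, Set.sdiff_empty] at h1
    linarith
  obtain ⟨x, hx⟩ := hMne
  refine ⟨σ, hσ, fun x hx => hfix x fun h => hx (hMB h), x, hMB hx, fun h => ?_⟩
  have := (hcyc x hx).2.2.1
  rw [h] at this
  omega

/-- After a modification inside `B`, some point of `B` returns to `B` at a different point. -/
lemma DynamicalSimplex.exists_nontrivial_return (hK : DynamicalSimplex K) {g : X ≃ₜ X}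
    {B : Set X} (hB : IsClopen B) (hne : B.Nonempty)
    (hrec : ∀ x, ∃ k, g^[k] x ∈ B) : ∃ γ : X ≃ₜ X, PreservesAll K γ ∧ (∀ x ∉ B, γ x = x) ∧
      ∃ x ∈ B, ∃ k, (fun y => γ (g y))^[k] x ∈ B ∧ (fun y => γ (g y))^[k] x ≠ x := by
  obtain ⟨σ, hσ, hσB, x, hx, hσx⟩ := hK.exists_moving hB hne
  obtain ⟨τ, hτ, hτB, hτ0, hτ1⟩ := exists_hit g.continuous hB hrec
  have hmin := hit_min hτ1 hτ0
  by_cases h : g^[τ (g x) + 1] x = x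
  · refine ⟨σ, hσ, hσB, x, hx, τ (g x) + 1, ?_⟩
    have key : ∀ n y, τ (g y) = n → (fun y => σ (g y))^[n + 1] y = σ (g^[n + 1] y) := by
      intro n
      induction n with
      | zero => intro y _; rfl
      | succ n ih =>
        intro y hy
        have hgy : g y ∉ B := fun h => by
          have := hτ0 _ h
          omega
        have h1 : τ (g (g y)) = n := by
          have := hτ1 _ hgy
          omega
        rw [Function.iterate_succ_apply, Function.iterate_succ_apply (f := g)]
        simp only [hσB _ hgy]
        exact ih (g y) h1
    rw [key _ x rfl, h]
    exact ⟨(mem_iff_of_supp hσB x).2 hx, hσx⟩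
  · refine ⟨Homeomorph.refl X, PreservesAll.refl, fun _ _ => rfl, x, hx, τ (g x) + 1, ?_, h⟩
    exact hτB (g x)

/-- The inductive step of the construction: `g` is modified inside `B` in such a way that `f`
becomes cohomologous to a nonnegative function, and `B` is replaced by a smaller set which decides
the clopen set `C`, as does its preimage. -/
theorem DynamicalSimplex.step (hK : DynamicalSimplex K) [Nonempty X] {g : X ≃ₜ X}
    (hg : PreservesAll K g) {B : Set X} (hB : IsClopen B) (hrec : ∀ x, ∃ k, g^[k] x ∈ B)
    {f : X → ℤ} (hf : IsLocallyConstant f)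
    (hpos : ∀ μ ∈ K, 0 < ∫ x, (f x : ℝ) ∂(μ : Measure X)) {C : Set X} (hC : IsClopen C) :
    ∃ (γ : X ≃ₜ X) (h : X → ℤ) (B' : Set X), PreservesAll K γ ∧ (∀ x ∉ B, γ x = x) ∧
      IsLocallyConstant h ∧ IsClopen B' ∧ B' ⊆ B ∧ (∀ x ∈ B', h x = 0) ∧
      (∀ x, 0 ≤ f x + h (γ (g x)) - h x) ∧ (∀ x, ∃ k, (fun y => γ (g y))^[k] x ∈ B') ∧
      (∀ x ∈ B', ∀ y ∈ B', (x ∈ C ↔ y ∈ C)) ∧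
      ∀ x y, γ (g x) ∈ B' → γ (g y) ∈ B' → (x ∈ C ↔ y ∈ C) := by
  classical
  obtain ⟨γ₁, hγ₁, hs₁, h, B₁, hh, hB₁, hBB₁, h0, hcob, hrec₁⟩ := hK.modify hg hB hrec hf hpos
  let g₁ := g.trans γ₁
  have hg₁ : PreservesAll K g₁ := hγ₁.comp hg
  have hrec₁' : ∀ x, ∃ k, g₁^[k] x ∈ B₁ := hrec₁
  have hne : B₁.Nonempty := by
    obtain ⟨k, hk⟩ := hrec₁ (Classical.arbitrary X)
    exact ⟨_, hk⟩
  obtain ⟨γ₂, hγ₂, hs₂, x, hx, k, hk, hkx⟩ := hK.exists_nontrivial_return hB₁ hne hrec₁'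
  let g₂ := g₁.trans γ₂
  have hg₂ : PreservesAll K g₂ := hγ₂.comp hg₁
  have hrec₂ : ∀ x, ∃ k, g₂^[k] x ∈ B₁ := rec_modify (g := g₁) (γ := γ₂) hs₂ hrec₁'
  have hk : g₂^[k] x ∈ B₁ := hk
  have hkx : g₂^[k] x ≠ x := hkx
  obtain ⟨N, hN, hxN, hNk⟩ := compact_exists_isClopen_in_isOpen
    (isOpen_compl_singleton (x := g₂^[k] x)) (Set.mem_compl_singleton_iff.2 hkx.symm)
  -- a small clopen neighbourhood of `x` which is moved off itself inside `B₁`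
  let V : Set X := {y | y ∈ N ∧ y ∈ B₁ ∧ g₂^[k] y ∈ B₁ ∧ g₂^[k] y ∉ N ∧ (y ∈ C ↔ x ∈ C) ∧
    (g₂.symm y ∈ C ↔ g₂.symm x ∈ C)}
  have hV : IsClopen V := by
    have c1 := g₂.continuous.iterate k
    have hl : IsLocallyConstant fun y => (y ∈ N, y ∈ B₁, g₂^[k] y ∈ B₁, g₂^[k] y ∈ N, y ∈ C,
        g₂.symm y ∈ C) :=
      (lc_mem hN).prodMk ((lc_mem hB₁).prodMk (((lc_mem hB₁).comp_continuous c1).prodMk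
        (((lc_mem hN).comp_continuous c1).prodMk ((lc_mem hC).prodMk
          ((lc_mem hC).comp_continuous g₂.symm.continuous)))))
    exact isClopen_preimage_of_lc hl {t | t.1 ∧ t.2.1 ∧ t.2.2.1 ∧ ¬ t.2.2.2.1 ∧
      (t.2.2.2.2.1 ↔ x ∈ C) ∧ (t.2.2.2.2.2 ↔ g₂.symm x ∈ C)}
  have hxV : x ∈ V := ⟨hxN, hx, hk, fun h => hNk h rfl, Iff.rfl, Iff.rfl⟩
  have hE : IsClopen (B₁ \ V) := hB₁.diff hV
  have hrecE : ∀ y, ∃ j, g₂^[j] y ∈ B₁ \ V := by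
    intro y
    obtain ⟨j, hj⟩ := hrec₂ y
    by_cases hyV : g₂^[j] y ∈ V
    · refine ⟨k + j, ?_⟩
      rw [Function.iterate_add_apply]
      exact ⟨hyV.2.2.1, fun h => hyV.2.2.2.1 h.1⟩
    · exact ⟨j, hj, hyV⟩
  -- a further modification inside `B₁ \ V`, which leaves `V` untouched, makes all orbits visit `V`
  obtain ⟨M, hM, hMpos⟩ := hK.exists_multiple hV ⟨x, hxV⟩
  obtain ⟨γ₃, hγ₃, hs₃, h₃, -, hh₃, -, -, -, hcob₃, -⟩ := hK.modify hg₂ hE hrecE hM hMpos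
  have hs₃' : ∀ y ∉ B₁, γ₃ y = y := fun y hy => hs₃ y fun h => hy h.1
  have hinv : ∀ y, h (γ₃ (γ₂ y)) = h y := by
    intro y
    by_cases hy : y ∈ B₁
    · rw [h0 y hy, h0 _ ((mem_iff_of_supp hs₃' _).2 ((mem_iff_of_supp hs₂ _).2 hy))]
    · rw [hs₂ y hy, hs₃' y hy]
  refine ⟨(γ₁.trans γ₂).trans γ₃, h, V, hγ₃.comp (hγ₂.comp hγ₁), ?_, hh, hV,
    fun y hy => hBB₁ hy.2.1, fun y hy => h0 y hy.2.1, ?_, ?_, ?_, ?_⟩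
  · intro y hy
    have hy1 : y ∉ B₁ := fun h => hy (hBB₁ h)
    simp only [Homeomorph.trans_apply]
    rw [hs₁ y hy, hs₂ y hy1, hs₃' y hy1]
  · intro y
    simp only [Homeomorph.trans_apply]
    rw [hinv]
    exact hcob y
  · exact fun y => hits_of_cob hh₃ M hcob₃ y
  · intro y hy z hz
    rw [hy.2.2.2.2.1, hz.2.2.2.2.1]
  · have hVV : ∀ y, γ₃ y ∈ V → y ∈ V := by
      intro y hy
      have h1 : y ∉ B₁ \ V := fun h => ((mem_iff_of_supp hs₃ y).2 h).2 hy
      rwa [hs₃ y h1] at hy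
    have hd : ∀ y, γ₃ (γ₂ (γ₁ (g y))) ∈ V → (y ∈ C ↔ g₂.symm x ∈ C) := by
      intro y hy
      have h1 : g₂ y ∈ V := hVV _ hy
      simpa using h1.2.2.2.2.2
    intro y z hy hz
    rw [hd y hy, hd z hz]

end Steps

end DynSimplex

/-! ### The limit homeomorphism -/

namespace DynSimplex

section Limit

variable {X : Type*} [TopologicalSpace X] [CompactSpace X] [TopologicalSpace.MetrizableSpace X]
  [TotallyDisconnectedSpace X] [MeasurableSpace X] [BorelSpace X]
  {K : Set (ProbabilityMeasure X)}

instance countable_lc : Countable {f : X → ℤ // IsLocallyConstant f} := by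
  classical
  let e : {f : X → ℤ // IsLocallyConstant f} → Finset (ℤ × TopologicalSpace.Clopens X) :=
    fun f => f.2.range_finite.toFinset.image
      fun a => (a, ⟨f.1 ⁻¹' {a}, isClopen_preimage_of_lc f.2 {a}⟩)
  refine Function.Injective.countable (f := e) fun f f' h => ?_
  ext x
  have : (f.1 x, (⟨f.1 ⁻¹' {f.1 x}, isClopen_preimage_of_lc f.2 {f.1 x}⟩ :
      TopologicalSpace.Clopens X)) ∈ e f := by
    simp only [e, Finset.mem_image]
    exact ⟨f.1 x, by simp, rfl⟩
  rw [h] at this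
  simp only [e, Finset.mem_image, Prod.mk.injEq] at this
  obtain ⟨a, -, rfl, h2⟩ := this
  have h3 : x ∈ f.1 ⁻¹' {f.1 x} := rfl
  have h4 := congrArg (fun C : TopologicalSpace.Clopens X => (C : Set X)) h2
  simp only [TopologicalSpace.Clopens.coe_mk] at h4
  rw [← h4] at h3
  exact h3.symm

/-- Every sequence in `X` has a cluster point, which lies in exactly those clopen sets, among the
ones where membership stabilises, that eventually contain the sequence. -/
lemma exists_clopen_limit (y : ℕ → X) :
    ∃ z, ∀ A : Set X, IsClopen A → ∀ n, (∀ m, n ≤ m → (y m ∈ A ↔ y n ∈ A)) →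
      (z ∈ A ↔ y n ∈ A) := by
  obtain ⟨z, hz⟩ := exists_clusterPt_of_compactSpace (map y atTop)
  have hz : MapClusterPt z atTop y := hz
  refine ⟨z, fun A hA n hn => ?_⟩
  rw [mapClusterPt_iff_frequently] at hz
  constructor
  · intro hzA
    obtain ⟨m, hm, hmA⟩ := frequently_atTop.1 (hz A (hA.isOpen.mem_nhds hzA)) n
    exact (hn m hm).1 hmA
  · intro hnA
    by_contra hzA
    obtain ⟨m, hm, hmA⟩ := frequently_atTop.1 (hz Aᶜ (hA.compl.isOpen.mem_nhds hzA)) n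
    exact hmA ((hn m hm).2 hnA)

/-- A sequence of homeomorphisms that, together with the inverses, is eventually constant on
every clopen set converges to a homeomorphism. -/
lemma exists_limit_homeo (g : ℕ → X ≃ₜ X)
    (h : ∀ A : Set X, IsClopen A → ∃ n, ∀ m, n ≤ m → ∀ x, (g m x ∈ A ↔ g n x ∈ A) ∧
      ((g m).symm x ∈ A ↔ (g n).symm x ∈ A)) :
    ∃ φ : X ≃ₜ X, ∀ A : Set X, IsClopen A → ∀ n, (∀ m, n ≤ m → ∀ x, (g m x ∈ A ↔ g n x ∈ A)) →
      ∀ x, (φ x ∈ A ↔ g n x ∈ A) := by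
  choose φ hφ using fun x => exists_clopen_limit (fun n => g n x)
  choose ψ hψ using fun x => exists_clopen_limit (fun n => (g n).symm x)
  have cφ : Continuous φ := by
    rw [isTopologicalBasis_isClopen.continuous_iff]
    intro A hA
    obtain ⟨n, hn⟩ := h A hA
    have : φ ⁻¹' A = g n ⁻¹' A := by
      ext x; exact hφ x A hA n fun m hm => (hn m hm x).1
    rw [this]
    exact hA.isOpen.preimage (g n).continuous
  have cψ : Continuous ψ := by
    rw [isTopologicalBasis_isClopen.continuous_iff]
    intro A hA
    obtain ⟨n, hn⟩ := h A hA
    have : ψ ⁻¹' A = (g n).symm ⁻¹' A := by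
      ext x; exact hψ x A hA n fun m hm => (hn m hm x).2
    rw [this]
    exact hA.isOpen.preimage (g n).symm.continuous
  refine ⟨⟨⟨φ, ψ, fun x => eq_of_clopen fun A hA => ?_, fun x => eq_of_clopen fun A hA => ?_⟩,
    cφ, cψ⟩, fun A hA n hn x => hφ x A hA n fun m hm => hn m hm x⟩
  · obtain ⟨n, hn⟩ := h A hA
    have hA' : IsClopen ((g n).symm ⁻¹' A) := hA.preimage (g n).symm.continuous
    obtain ⟨k, hk⟩ := h _ hA'
    rw [hψ _ A hA n fun m hm => (hn m hm _).2]
    have h1 := hφ x _ hA' k fun m hm => (hk m hm x).1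
    have h2 := (hk (max k n) (le_max_left _ _) x).1
    have h3 := (hn (max k n) (le_max_right _ _) (g (max k n) x)).2
    simp only [Homeomorph.symm_apply_apply] at h3
    exact h1.trans (h2.symm.trans h3.symm)
  · obtain ⟨n, hn⟩ := h A hA
    have hA' : IsClopen (g n ⁻¹' A) := hA.preimage (g n).continuous
    obtain ⟨k, hk⟩ := h _ hA'
    rw [hφ _ A hA n fun m hm => (hn m hm _).1]
    have h1 := hψ x _ hA' k fun m hm => (hk m hm x).2
    have h2 := (hk (max k n) (le_max_left _ _) x).2
    have h3 := (hn (max k n) (le_max_right _ _) ((g (max k n)).symm x)).1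
    simp only [Homeomorph.apply_symm_apply] at h3
    exact h1.trans (h2.symm.trans h3.symm)

/-- There is a single `K`-preserving homeomorphism for which every integer-valued locally constant
function with positive integrals is cohomologous to a nonnegative one. -/
theorem DynamicalSimplex.exists_limit (hK : DynamicalSimplex K) [Nonempty X] :
    ∃ g : X ≃ₜ X, PreservesAll K g ∧ ∀ f : X → ℤ, IsLocallyConstant f →
      (∀ μ ∈ K, 0 < ∫ x, (f x : ℝ) ∂(μ : Measure X)) →
      ∃ h : X → ℤ, IsLocallyConstant h ∧ ∀ x, 0 ≤ f x + h (g x) - h x := by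
  classical
  let St := {s : (X ≃ₜ X) × Set X // PreservesAll K s.1 ∧ IsClopen s.2 ∧
    ∀ x, ∃ k, s.1^[k] x ∈ s.2}
  obtain ⟨C, hC⟩ := exists_surjective_nat (TopologicalSpace.Clopens X)
  let PF := {f : {f : X → ℤ // IsLocallyConstant f} //
    ∀ μ ∈ K, 0 < ∫ x, (f.1 x : ℝ) ∂(μ : Measure X)}
  have : Nonempty PF := ⟨⟨⟨fun _ => 1, IsLocallyConstant.const 1⟩, fun μ _ => by simp⟩⟩
  obtain ⟨F, hF⟩ := exists_surjective_nat PF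
  have step : ∀ (s : St) (n : ℕ), ∃ (t : St) (γ : X ≃ₜ X) (h : X → ℤ),
      (∀ x, t.1.1 x = γ (s.1.1 x)) ∧ (∀ x ∉ s.1.2, γ x = x) ∧ IsLocallyConstant h ∧
      t.1.2 ⊆ s.1.2 ∧ (∀ x ∈ t.1.2, h x = 0) ∧ (∀ x, 0 ≤ (F n).1.1 x + h (t.1.1 x) - h x) ∧
      (∀ x ∈ t.1.2, ∀ y ∈ t.1.2, (x ∈ C n ↔ y ∈ C n)) ∧
      ∀ x y, t.1.1 x ∈ t.1.2 → t.1.1 y ∈ t.1.2 → (x ∈ C n ↔ y ∈ C n) := by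
    rintro ⟨⟨g, B⟩, hg, hB, hrec⟩ n
    obtain ⟨γ, h, B', h1, h2, h3, h4, h5, h6, h7, h8, h9, h10⟩ :=
      hK.step hg hB hrec (F n).1.2 (F n).2 (C n).isClopen
    exact ⟨⟨(g.trans γ, B'), h1.comp hg, h4, h8⟩, γ, h, fun x => rfl, h2, h3, h5, h6, h7, h9, h10⟩
  choose nxt γ h hγ hsupp hlc hsub hzero hcob hdec hdec' using step
  -- the successive homeomorphisms `g n` and the sets `B n` inside which they get modified
  let s0 : St := ⟨(Homeomorph.refl X, Set.univ), PreservesAll.refl, isClopen_univ,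
    fun x => ⟨0, trivial⟩⟩
  let s : ℕ → St := fun n => Nat.rec s0 (fun n t => nxt t n) n
  have hs : ∀ n, s (n + 1) = nxt (s n) n := fun n => rfl
  let g : ℕ → X ≃ₜ X := fun n => (s n).1.1
  let B : ℕ → Set X := fun n => (s n).1.2
  let c : ℕ → X ≃ₜ X := fun n => γ (s n) n
  have gc : ∀ n x, g (n + 1) x = c n (g n x) := fun n => hγ (s n) n
  have gc' : ∀ n x, (g (n + 1)).symm x = (g n).symm ((c n).symm x) := by
    intro n x
    rw [Homeomorph.symm_apply_eq, gc]
    simp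
  have cs : ∀ n, ∀ x ∉ B n, c n x = x := fun n => hsupp (s n) n
  have cB : ∀ n x, c n x ∈ B n ↔ x ∈ B n := fun n => mem_iff_of_supp (cs n)
  have mono : ∀ m n, n ≤ m → B m ⊆ B n := by
    intro m n hmn
    induction hmn with
    | refl => exact le_rfl
    | step _ ih => exact (hsub _ _).trans ih
  have d1 : ∀ n, ∀ x ∈ B (n + 1), ∀ y ∈ B (n + 1), (x ∈ C n ↔ y ∈ C n) :=
    fun n => hdec (s n) n
  have d2 : ∀ n m, n + 1 ≤ m → ∀ x y, g m x ∈ B m → g m y ∈ B m → (x ∈ C n ↔ y ∈ C n) := by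
    intro n m hm
    induction hm with
    | refl => exact hdec' (s n) n
    | @step m hm ih =>
      intro x y hx hy
      refine ih x y ?_ ?_
      · have := mono (m + 1) m (by omega) hx
        rwa [gc, cB] at this
      · have := mono (m + 1) m (by omega) hy
        rwa [gc, cB] at this
  have stab1 : ∀ n m, n + 1 ≤ m → ∀ x, (g m x ∈ C n ↔ g (n + 1) x ∈ C n) := by
    intro n m hm
    induction hm with
    | refl => exact fun x => Iff.rfl
    | @step m hm ih =>
      intro x
      rw [← ih x, gc]
      by_cases hx : g m x ∈ B m
      · exact d1 n _ (mono _ _ hm ((cB _ _).2 hx)) _ (mono _ _ hm hx)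
      · rw [cs m _ hx]
  have stab2 : ∀ n m, n + 1 ≤ m → ∀ x, ((g m).symm x ∈ C n ↔ (g (n + 1)).symm x ∈ C n) := by
    intro n m hm
    induction hm with
    | refl => exact fun x => Iff.rfl
    | @step m hm ih =>
      intro x
      rw [← ih x, gc']
      by_cases hx : x ∈ B m
      · refine d2 n m hm _ _ ?_ ?_
        · rw [Homeomorph.apply_symm_apply, ← cB m, Homeomorph.apply_symm_apply]
          exact hx
        · simpa using hx
      · have : (c m).symm x = x := by rw [Homeomorph.symm_apply_eq, cs m x hx]
        rw [this]
  have stab : ∀ A : Set X, IsClopen A → ∃ n, ∀ m, n ≤ m → ∀ x, (g m x ∈ A ↔ g n x ∈ A) ∧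
      ((g m).symm x ∈ A ↔ (g n).symm x ∈ A) := by
    intro A hA
    obtain ⟨n, hn⟩ := hC ⟨A, hA⟩
    have e : A = (C n : Set X) := by rw [hn]; rfl
    rw [e]
    exact ⟨n + 1, fun m hm x => ⟨stab1 n m hm x, stab2 n m hm x⟩⟩
  obtain ⟨φ, hφ⟩ := exists_limit_homeo g stab
  refine ⟨φ, preservesAll_of_clopen fun μ hμ A hA => ?_, fun f hf hpos => ?_⟩
  · obtain ⟨n, hn⟩ := stab A hA
    have : φ ⁻¹' A = g n ⁻¹' A := by
      ext x; exact hφ A hA n (fun m hm x => (hn m hm x).1) x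
    rw [this]
    exact (s n).2.1.pm_preimage hμ (clopen_meas hA)
  · obtain ⟨n, hn⟩ := hF ⟨⟨f, hf⟩, hpos⟩
    refine ⟨h (s n) n, hlc _ _, fun x => ?_⟩
    -- later modifications take place where the transfer function vanishes
    have hh : ∀ m, n + 1 ≤ m → ∀ x, h (s n) n (g m x) = h (s n) n (g (n + 1) x) := by
      intro m hm
      induction hm with
      | refl => exact fun x => rfl
      | @step m hm ih =>
        intro x
        rw [← ih x, gc]
        by_cases hx : g m x ∈ B m
        · rw [hzero (s n) n _ (mono _ _ hm ((cB _ _).2 hx)), hzero (s n) n _ (mono _ _ hm hx)]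
        · rw [cs m _ hx]
    have key := (hφ (h (s n) n ⁻¹' {h (s n) n (φ x)}) (isClopen_preimage_of_lc (hlc _ _) _) (n + 1)
      (fun m hm y => by
        change h (s n) n (g m y) = _ ↔ h (s n) n (g (n + 1) y) = _
        rw [hh m hm]) x).1 rfl
    have key : h (s n) n (g (n + 1) x) = h (s n) n (φ x) := key
    rw [← key]
    have := hcob (s n) n x
    rw [hn] at this
    exact this

end Limit

end DynSimplex

/-! ### Separation and realisation -/

namespace DynSimplex

section Realisation

variable {X : Type*} [TopologicalSpace X] [CompactSpace X] [TopologicalSpace.MetrizableSpace X]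
  [TotallyDisconnectedSpace X] [MeasurableSpace X] [BorelSpace X]
  {K : Set (ProbabilityMeasure X)}

lemma lc_finset_sum {ι : Type*} (s : Finset ι) {f : ι → X → ℤ}
    (hf : ∀ i, IsLocallyConstant (f i)) : IsLocallyConstant fun x => ∑ i ∈ s, f i x := by
  classical
  induction s using Finset.induction_on with
  | empty => exact IsLocallyConstant.const (0 : ℤ)
  | insert a s ha ih =>
    simp only [Finset.sum_insert ha]
    exact (hf a).comp₂ ih (· + ·)

/-- Convexity over `ℝ≥0` in the space of finite measures, read off on values at given sets. -/
lemma convex_image {ι : Type*} (hK : ProbConvex K) (A : ι → Set X) :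
    Convex ℝ ((fun (μ : ProbabilityMeasure X) (i : ι) => (μ (A i) : ℝ)) '' K) := by
  rintro _ ⟨μ, hμ, rfl⟩ _ ⟨ν, hν, rfl⟩ a b ha hb hab
  lift a to NNReal using ha
  lift b to NNReal using hb
  obtain ⟨ρ, hρ, h⟩ := hK ⟨μ, hμ, rfl⟩ ⟨ν, hν, rfl⟩ (zero_le : 0 ≤ a) (zero_le : 0 ≤ b)
    (by exact_mod_cast hab)
  refine ⟨ρ, hρ, ?_⟩
  ext i
  have h1 := congrArg (fun m : FiniteMeasure X => m (A i)) h
  simp only [FiniteMeasure.coeFn_add, FiniteMeasure.coeFn_smul, Pi.add_apply, Pi.smul_apply,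
    ProbabilityMeasure.coeFn_toFiniteMeasure] at h1
  simp [h1]

/-- A measure outside a compact convex set `K` is separated from `K` by an integer-valued locally
constant function: Hahn–Banach for finitely many clopen sets, followed by rounding. -/
lemma exists_separating (hKc : IsCompact K) (hconv : ProbConvex K) {ν : ProbabilityMeasure X}
    (hν : ν ∉ K) : ∃ f : X → ℤ, IsLocallyConstant f ∧
      (∀ μ ∈ K, 0 < ∫ x, (f x : ℝ) ∂(μ : Measure X)) ∧ ∫ x, (f x : ℝ) ∂(ν : Measure X) < 0 := by
  classical
  obtain ⟨t, ht⟩ := hKc.elim_finite_subcover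
    (fun A : TopologicalSpace.Clopens X => {μ : ProbabilityMeasure X | (μ A : ℝ) ≠ ν A})
    (fun A => isOpen_ne_fun (continuous_pm A.isClopen) continuous_const) (fun μ hμ => by
      by_contra hcon
      refine hν ?_
      have : μ = ν := by
        apply Subtype.ext
        refine ext_clopen (μ := (μ : Measure X)) (ν := (ν : Measure X)) fun A hA => ?_
        by_contra hne
        refine hcon (Set.mem_iUnion.2 ⟨⟨A, hA⟩, ?_⟩)
        intro h
        refine hne ?_
        have h : μ A = ν A := NNReal.coe_injective h
        rw [← ProbabilityMeasure.ennreal_coeFn_eq_coeFn_toMeasure,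
          ← ProbabilityMeasure.ennreal_coeFn_eq_coeFn_toMeasure, h]
      rwa [← this])
  let Φ : ProbabilityMeasure X → (t → ℝ) := fun μ i => (μ (i.1 : Set X) : ℝ)
  have hΦ : Continuous Φ := continuous_pi fun i => continuous_pm i.1.isClopen
  obtain ⟨l, u, h1, h2⟩ := geometric_hahn_banach_point_closed (convex_image hconv _)
    (hKc.image hΦ).isClosed (x := Φ ν) (by
      rintro ⟨μ, hμ, h⟩
      obtain ⟨A, hA, hne⟩ := Set.mem_iUnion₂.1 (ht hμ)
      exact hne (congrFun h ⟨A, hA⟩))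
  let c : t → ℝ := fun i => l (fun j => if i = j then 1 else 0)
  have hl : ∀ v, l v = ∑ i, v i * c i := fun v => by
    have := LinearMap.pi_apply_eq_sum_univ (l : (t → ℝ) →ₗ[ℝ] ℝ) v
    simpa [c] using this
  -- rounding `N * c i` costs at most `card t`, and rounding the constant at most `1`
  obtain ⟨N, hN⟩ := exists_nat_gt (((Fintype.card t : ℝ) + 2) / (u - l (Φ ν)))
  rw [div_lt_iff₀ (by linarith)] at hN
  let f : X → ℤ := fun x => ∑ i : t, ⌊N * c i⌋ * (if x ∈ i.1 then 1 else 0) - (⌊N * l (Φ ν)⌋ + 1)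
  have hfi : ∀ i : t, IsLocallyConstant fun x => ⌊N * c i⌋ * (if x ∈ i.1 then 1 else 0) :=
    fun i => (lc_ite (lc_mem i.1.isClopen) (IsLocallyConstant.const (1 : ℤ))
      (IsLocallyConstant.const 0)).comp (⌊N * c i⌋ * ·)
  have hfs := lc_finset_sum Finset.univ hfi
  have hf : IsLocallyConstant f := hfs.comp (· - (⌊N * l (Φ ν)⌋ + 1))
  have hintegral : ∀ μ : ProbabilityMeasure X, ∫ x, (f x : ℝ) ∂(μ : Measure X) =
      ∑ i, Φ μ i * ⌊N * c i⌋ - (⌊N * l (Φ ν)⌋ + 1) := by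
    intro μ
    have j1 := integrable_lc (μ := μ) hfs
    have j2 := fun i => integrable_lc (μ := μ) (hfi i)
    simp only [f]
    push_cast at j1 j2 ⊢
    rw [integral_sub j1 (integrable_const _), integral_finsetSum _ fun i _ => j2 i]
    congr 1
    · refine Finset.sum_congr rfl fun i _ => ?_
      rw [integral_const_mul]
      have := integral_indicator_clopen μ i.1.isClopen
      simp only [Φ]
      rw [mul_comm, ← this]
      rfl
    · simp
  have hΦ0 : ∀ μ i, 0 ≤ Φ μ i := fun μ i => NNReal.coe_nonneg _
  have hΦ1 : ∀ μ i, Φ μ i ≤ 1 := fun μ i => by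
    exact_mod_cast ProbabilityMeasure.apply_le_one μ _
  refine ⟨f, hf, fun μ hμ => ?_, ?_⟩
  · rw [hintegral]
    have e1 : ∑ i, Φ μ i * (N * c i) - Fintype.card t ≤ ∑ i, Φ μ i * ⌊N * c i⌋ := by
      have : (Fintype.card t : ℝ) = ∑ i : t, (1 : ℝ) := by simp
      rw [this, ← Finset.sum_sub_distrib]
      refine Finset.sum_le_sum fun i _ => ?_
      have a1 := Int.sub_one_lt_floor (N * c i)
      nlinarith [hΦ0 μ i, hΦ1 μ i]
    have e2 : ∑ i, Φ μ i * (N * c i) = N * l (Φ μ) := by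
      rw [hl, Finset.mul_sum]
      exact Finset.sum_congr rfl fun i _ => by ring
    have e3 := Int.floor_le (N * l (Φ ν))
    have e4 : u < l (Φ μ) := h2 _ ⟨μ, hμ, rfl⟩
    have e5 : (N : ℝ) * u ≤ N * l (Φ μ) := mul_le_mul_of_nonneg_left e4.le (Nat.cast_nonneg _)
    linarith
  · rw [hintegral]
    have e1 : ∑ i, Φ ν i * ⌊N * c i⌋ ≤ ∑ i, Φ ν i * (N * c i) :=
      Finset.sum_le_sum fun i _ => mul_le_mul_of_nonneg_left (Int.floor_le _) (hΦ0 ν i)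
    have e2 : ∑ i, Φ ν i * (N * c i) = N * l (Φ ν) := by
      rw [hl, Finset.mul_sum]
      exact Finset.sum_congr rfl fun i _ => by ring
    have e3 := Int.lt_floor_add_one (N * l (Φ ν))
    linarith

lemma zpow_apply (g : X ≃ₜ X) (k : ℕ) (x : X) : (g.toEquiv ^ (k : ℤ)) x = g^[k] x := by
  rw [zpow_natCast, ← Equiv.Perm.iterate_eq_pow]
  rfl

/-- Every dynamical simplex is the set of invariant measures of a minimal homeomorphism. -/
theorem DynamicalSimplex.realise (hK : DynamicalSimplex K) [Nonempty X] :
    ∃ g : X ≃ₜ X, IsMinimal g ∧ {μ : ProbabilityMeasure X | Preserves g μ} = K := by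
  classical
  obtain ⟨g, hg, hcob⟩ := hK.exists_limit
  refine ⟨g, fun x => ?_, Set.Subset.antisymm (fun ν hν => ?_) fun μ hμ => hg μ hμ⟩
  · rw [dense_iff_inter_open]
    rintro U hU ⟨y, hy⟩
    obtain ⟨V, hV, hyV, hVU⟩ := compact_exists_isClopen_in_isOpen hU hy
    obtain ⟨M, hM, hpos⟩ := hK.exists_multiple hV ⟨y, hyV⟩
    obtain ⟨h, hh, hc⟩ := hcob _ hM hpos
    obtain ⟨k, hk⟩ := hits_of_cob hh M hc x
    exact ⟨g^[k] x, hVU hk, k, zpow_apply g k x⟩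
  · by_contra hνK
    obtain ⟨f, hf, hpos, hneg⟩ := exists_separating hK.2.1 hK.2.2.1 hνK
    obtain ⟨h, hh, hc⟩ := hcob f hf hpos
    have hν' : PreservesAll {ν} g := by
      rintro _ rfl
      exact hν
    have i1 := integrable_lc (μ := ν) hf
    have i2 := integrable_lc (μ := ν) hh
    have i3 : Integrable (fun x => (h (g x) : ℝ)) (ν : Measure X) :=
      integrable_lc (hh.comp_continuous g.continuous)
    have i4 : Integrable (fun x => (f x : ℝ) + (h (g x) : ℝ)) (ν : Measure X) := i1.add i3
    have e : 0 ≤ ∫ x, ((f x : ℝ) + (h (g x) : ℝ) - (h x : ℝ)) ∂(ν : Measure X) :=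
      integral_nonneg fun x => by
        have := hc x
        change (0 : ℝ) ≤ (f x : ℝ) + (h (g x) : ℝ) - (h x : ℝ)
        exact_mod_cast this
    rw [integral_sub i4 i2, integral_add i1 i3, hν'.integral_comp rfl (fun x => (h x : ℝ))] at e
    linarith

end Realisation

end DynSimplex

/-! ### Invariant measures of a minimal homeomorphism -/

namespace DynSimplex

section Invariant

variable {X : Type*} [TopologicalSpace X] [CompactSpace X] [TopologicalSpace.MetrizableSpace X]
  [TotallyDisconnectedSpace X] [MeasurableSpace X] [BorelSpace X]

/-- The set of `g`-invariant Borel probability measures. -/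
def invMeasures (g : X ≃ₜ X) : Set (ProbabilityMeasure X) := {μ | Preserves g μ}

lemma preservesAll_inv (g : X ≃ₜ X) : PreservesAll (invMeasures g) g := fun _ hμ => hμ

lemma mem_inv_of_clopen {g : X ≃ₜ X} {μ : ProbabilityMeasure X}
    (h : ∀ A : Set X, IsClopen A → μ (g ⁻¹' A) = μ A) : μ ∈ invMeasures g :=
  preservesAll_of_clopen (K := {μ}) (by rintro _ rfl; exact h) μ rfl

lemma isCompact_inv (g : X ≃ₜ X) : IsCompact (invMeasures g) := by
  have : invMeasures g = ⋂ A : TopologicalSpace.Clopens X,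
      {μ : ProbabilityMeasure X | (μ (g ⁻¹' A) : ℝ) = μ A} := by
    ext μ
    simp only [Set.mem_iInter]
    constructor
    · intro hμ A
      have := (preservesAll_inv g).pm_preimage hμ (clopen_meas A.isClopen)
      exact congrArg _ this
    · intro h
      exact mem_inv_of_clopen fun A hA => NNReal.coe_injective (h ⟨A, hA⟩)
  rw [this]
  refine IsClosed.isCompact (isClosed_iInter fun A => isClosed_eq ?_ ?_)
  · exact continuous_pm (A.isClopen.preimage g.continuous)
  · exact continuous_pm A.isClopen

lemma probConvex_inv (g : X ≃ₜ X) : ProbConvex (invMeasures g) := by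
  rintro _ ⟨μ, hμ, rfl⟩ _ ⟨ν, hν, rfl⟩ a b ha hb hab
  have hp : IsProbabilityMeasure (a • (μ : Measure X) + b • (ν : Measure X)) := by
    constructor
    have : (a : ENNReal) * 1 + (b : ENNReal) * 1 = 1 := by
      rw [mul_one, mul_one]
      exact_mod_cast hab
    rw [Measure.add_apply, Measure.smul_apply, Measure.smul_apply, measure_univ, measure_univ]
    exact this
  refine ⟨⟨a • (μ : Measure X) + b • (ν : Measure X), hp⟩, ?_, ?_⟩
  · change (a • (μ : Measure X) + b • (ν : Measure X)).map g =
      a • (μ : Measure X) + b • (ν : Measure X)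
    have hμ : (μ : Measure X).map g = μ := hμ
    have hν : (ν : Measure X).map g = ν := hν
    rw [Measure.map_add _ _ g.continuous.measurable, Measure.map_smul, Measure.map_smul, hμ, hν]
  · apply Subtype.ext
    rfl

/-- For a minimal homeomorphism of a compact space, forward orbits visit every nonempty open
set. -/
lemma IsMinimal.hits {g : X ≃ₜ X} (hg : IsMinimal g) {U : Set X} (hU : IsOpen U)
    (hne : U.Nonempty) (x : X) : ∃ k : ℕ, g^[k] x ∈ U := by
  have cont : ∀ n : ℤ, Continuous fun x => (g.toEquiv ^ n) x := by
    intro n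
    obtain ⟨k, rfl | rfl⟩ := n.eq_nat_or_neg
    · simp only [zpow_apply]
      exact g.continuous.iterate k
    · have : ∀ x, (g.toEquiv ^ (-(k : ℤ))) x = g.symm^[k] x := by
        intro x
        rw [zpow_neg, ← inv_zpow, zpow_natCast, ← Equiv.Perm.iterate_eq_pow]
        rfl
      simp only [this]
      exact g.symm.continuous.iterate k
  obtain ⟨t, ht⟩ := isCompact_univ.elim_finite_subcover
    (fun n : ℤ => (fun x => (g.toEquiv ^ n) x) ⁻¹' U) (fun n => hU.preimage (cont n))
    (fun x _ => by
      obtain ⟨_, hy, n, rfl⟩ := (hg x).inter_open_nonempty U hU hne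
      exact Set.mem_iUnion.2 ⟨n, hy⟩)
  -- a finite set of integer times suffices, and shifting by `N` makes all of them nonnegative
  let N : ℕ := ∑ n ∈ t, n.natAbs
  obtain ⟨n, hn, hx⟩ := Set.mem_iUnion₂.1 (ht (Set.mem_univ ((g.toEquiv ^ (N : ℤ)) x)))
  have h1 : n.natAbs ≤ N := Finset.single_le_sum (f := fun n : ℤ => n.natAbs)
    (fun _ _ => Nat.zero_le _) hn
  obtain ⟨k, hk⟩ := Int.eq_ofNat_of_zero_le (show 0 ≤ n + N by omega)
  refine ⟨k, ?_⟩
  have hx : (g.toEquiv ^ n) ((g.toEquiv ^ (N : ℤ)) x) ∈ U := hx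
  rw [← zpow_apply, ← hk, zpow_add]
  exact hx

lemma fullSupport_inv {g : X ≃ₜ X} (hg : IsMinimal g) {μ : ProbabilityMeasure X}
    (hμ : μ ∈ invMeasures g) : FullSupport μ := by
  intro U hU hne
  rw [pos_iff_ne_zero]
  intro h0
  have h0 : (μ : Measure X) U = 0 := by
    rw [← ProbabilityMeasure.ennreal_coeFn_eq_coeFn_toMeasure, h0]; rfl
  have h1 : (μ : Measure X) (⋃ k : ℕ, g^[k] ⁻¹' U) = 0 := measure_iUnion_null fun k => by
    rw [((preserves_iff.1 hμ).iterate k).measure_preimage hU.measurableSet.nullMeasurableSet, h0]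
  have h2 : (⋃ k : ℕ, g^[k] ⁻¹' U) = Set.univ := by
    ext x
    simpa using hg.hits hU hne x
  rw [h2] at h1
  simp at h1

lemma atomless_inv [PerfectSpace X] {g : X ≃ₜ X} (hg : IsMinimal g) {μ : ProbabilityMeasure X}
    (hμ : μ ∈ invMeasures g) : Atomless μ := by
  intro x
  by_contra h0
  have h0 : (μ : Measure X) {x} ≠ 0 := by
    rw [← ProbabilityMeasure.ennreal_coeFn_eq_coeFn_toMeasure]
    exact_mod_cast h0
  have hinf : (Set.range fun k : ℕ => g^[k] x).Infinite := by
    intro hfin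
    have hne : (Set.range fun k : ℕ => g^[k] x)ᶜ.Nonempty := by
      rw [Set.nonempty_compl]
      intro h
      rw [h] at hfin
      exact infinite_of_mem_nhds x univ_mem hfin
    obtain ⟨k, hk⟩ := hg.hits hfin.isClosed.isOpen_compl hne x
    exact hk ⟨k, rfl⟩
  have := hinf.meas_eq_top (μ := (μ : Measure X)) ⟨_, h0, by
    rintro _ ⟨k, rfl⟩
    have e : g^[k] ⁻¹' {g^[k] x} = {x} := by
      ext y
      simp [(g.injective.iterate k).eq_iff]
    have := ((preserves_iff.1 hμ).iterate k).measure_preimage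
      (measurableSet_singleton (g^[k] x)).nullMeasurableSet
    rw [e] at this
    exact this.le⟩
  exact measure_ne_top _ _ this

/-- Empirical measures along orbit segments. -/
lemma exists_empirical (g : X ≃ₜ X) {N : ℕ} (hN : 1 ≤ N) (x : X) : ∃ ρ : ProbabilityMeasure X,
    ∀ f : X → ℤ, IsLocallyConstant f → ∫ y, (f y : ℝ) ∂(ρ : Measure X) =
      (N : ℝ)⁻¹ * ((∑ k ∈ Finset.range N, f (g^[k] x) : ℤ) : ℝ) := by
  let m : Measure X := (N : ENNReal)⁻¹ • ∑ k ∈ Finset.range N, Measure.dirac (g^[k] x)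
  have hm : IsProbabilityMeasure m := by
    constructor
    simp only [m, Measure.smul_apply, Measure.coe_finsetSum, Finset.sum_apply, measure_univ,
      Finset.sum_const, Finset.card_range, smul_eq_mul, nsmul_eq_mul, mul_one]
    exact ENNReal.inv_mul_cancel (by simp; omega) (by simp)
  refine ⟨⟨m, hm⟩, fun f hf => ?_⟩
  have hc : Continuous fun x => (f x : ℝ) := (hf.comp (fun n : ℤ => (n : ℝ))).continuous
  change ∫ y, (f y : ℝ) ∂m = _
  rw [integral_smul_measure, integral_finsetSum_measure]
  · simp [integral_dirac]
  · intro k _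
    exact hc.integrable_of_hasCompactSupport (HasCompactSupport.of_compactSpace _)

/-- A locally constant function with positive integral against all invariant measures has positive
Birkhoff sums of some fixed length: otherwise a limit of empirical measures would be an invariant
measure with nonpositive integral. -/
lemma exists_birkhoff_pos (g : X ≃ₜ X) {f : X → ℤ} (hf : IsLocallyConstant f)
    (hpos : ∀ μ ∈ invMeasures g, 0 < ∫ x, (f x : ℝ) ∂(μ : Measure X)) :
    ∃ N : ℕ, ∀ x, 0 < ∑ k ∈ Finset.range N, f (g^[k] x) := by
  classical
  by_contra! hcon
  choose x hx using hcon
  choose ρ hρ using fun N : ℕ => exists_empirical g (Nat.succ_le_succ (Nat.zero_le N)) (x (N + 1))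
  -- an ultrafilter limit of the empirical measures is invariant
  let 𝒰 : Ultrafilter ℕ := Ultrafilter.of atTop
  have h𝒰 : (𝒰 : Filter ℕ) ≤ atTop := Ultrafilter.of_le atTop
  let μ := (𝒰.map ρ).lim
  have hlim : Tendsto ρ 𝒰 (𝓝 μ) := (𝒰.map ρ).le_nhds_lim
  have hinv : μ ∈ invMeasures g := by
    refine mem_inv_of_clopen fun A hA => ?_
    have hA' : IsClopen (g ⁻¹' A) := hA.preimage g.continuous
    let u : X → ℤ := fun x => if x ∈ A then 1 else 0
    have hu : IsLocallyConstant u :=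
      lc_ite (lc_mem hA) (IsLocallyConstant.const 1) (IsLocallyConstant.const 0)
    have hug : IsLocallyConstant fun x => u (g x) := hu.comp_continuous g.continuous
    have hv : IsLocallyConstant fun x => u (g x) - u x := hug.comp₂ hu (· - ·)
    have lim1 := ((continuous_integral_lc hv).tendsto μ).comp hlim
    have lim2 : Tendsto ((fun μ : ProbabilityMeasure X =>
        ∫ x, ((u (g x) - u x : ℤ) : ℝ) ∂(μ : Measure X)) ∘ ρ) 𝒰 (𝓝 0) := by
      refine Tendsto.mono_left ?_ h𝒰
      refine squeeze_zero_norm (a := fun n : ℕ => 1 / ((n : ℝ) + 1)) (fun n => ?_)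
        tendsto_one_div_add_atTop_nhds_zero_nat
      simp only [Function.comp, hρ n _ hv, ← Function.iterate_succ_apply' (g : X → X)]
      rw [Finset.sum_range_sub (fun k => u (g^[k] (x (n + 1))))]
      have b : |((u (g^[n.succ] (x (n + 1))) - u (g^[0] (x (n + 1))) : ℤ) : ℝ)| ≤ 1 := by
        simp only [u]
        split_ifs <;> simp
      rw [norm_mul, Real.norm_eq_abs, Real.norm_eq_abs, abs_of_nonneg (by positivity)]
      have c : (0 : ℝ) ≤ ((n.succ : ℕ) : ℝ)⁻¹ := by positivity
      have := mul_le_mul_of_nonneg_left b c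
      refine this.trans ?_
      simp
    have h0 := tendsto_nhds_unique lim1 lim2
    have i1 := integrable_lc (μ := μ) hu
    have i2 := integrable_lc (μ := μ) hug
    simp only [Int.cast_sub] at h0
    rw [integral_sub i2 i1] at h0
    simp only [u, Int.cast_ite, Int.cast_one, Int.cast_zero] at h0
    have e1 := integral_indicator_clopen μ hA
    have e2 := integral_indicator_clopen μ hA'
    simp only [Set.mem_preimage] at e2
    rw [e1, e2] at h0
    exact NNReal.coe_injective (sub_eq_zero.1 h0)
  have h1 := hpos μ hinv
  have lim := ((continuous_integral_lc hf).tendsto μ).comp hlim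
  refine absurd h1 (not_lt.2 (le_of_tendsto' lim fun n => ?_))
  simp only [Function.comp, hρ n f hf]
  have h2 : ((∑ k ∈ Finset.range n.succ, f (g^[k] (x (n + 1))) : ℤ) : ℝ) ≤ 0 := by
    exact_mod_cast hx (n + 1)
  exact mul_nonpos_of_nonneg_of_nonpos (by positivity) h2

end Invariant

end DynSimplex

/-! ### Goodness and approximate divisibility of the invariant measures -/

namespace DynSimplex

section Forward

variable {X : Type*} [TopologicalSpace X] [CompactSpace X] [TopologicalSpace.MetrizableSpace X]
  [TotallyDisconnectedSpace X] [MeasurableSpace X] [BorelSpace X]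

lemma pm_iterate {g : X ≃ₜ X} {μ : ProbabilityMeasure X} (hμ : μ ∈ invMeasures g) {A : Set X}
    (hA : IsClopen A) (n : ℕ) : (μ (g^[n] ⁻¹' A) : ℝ) = μ A := by
  have := ((preserves_iff.1 hμ).iterate n).measure_preimage (clopen_meas hA).nullMeasurableSet
  rw [← ProbabilityMeasure.ennreal_coeFn_eq_coeFn_toMeasure,
    ← ProbabilityMeasure.ennreal_coeFn_eq_coeFn_toMeasure] at this
  exact_mod_cast this

/-- The set of invariant measures is good.  Points of `A` are greedily matched with points of `B`
lying in their forward orbits, at distance `0, 1, 2, …` in turn; positivity of the Birkhoff sums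
of `1_B - 1_A` implies that `A` is exhausted after finitely many stages. -/
theorem good_inv (g : X ≃ₜ X) : Good (invMeasures g) := by
  classical
  intro A B hA hB hAB
  -- `(a n, b n)` are the parts of `A` and `B` left unmatched before stage `n`
  let P : ℕ → Set X × Set X := fun n => Nat.rec (A, B)
    (fun n p => (p.1 \ (g^[n] ⁻¹' p.2), p.2 \ (g.symm^[n] ⁻¹' p.1))) n
  let a : ℕ → Set X := fun n => (P n).1
  let b : ℕ → Set X := fun n => (P n).2
  have ha : ∀ n, a (n + 1) = a n \ (g^[n] ⁻¹' b n) := fun n => rfl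
  have hb : ∀ n, b (n + 1) = b n \ (g.symm^[n] ⁻¹' a n) := fun n => rfl
  have hcl : ∀ n, IsClopen (a n) ∧ IsClopen (b n) := by
    intro n
    induction n with
    | zero => exact ⟨hA, hB⟩
    | succ n ih =>
      rw [ha, hb]
      exact ⟨ih.1.diff (ih.2.preimage (g.continuous.iterate n)),
        ih.2.diff (ih.1.preimage (g.symm.continuous.iterate n))⟩
  have amono : ∀ m n, n ≤ m → a m ⊆ a n := by
    intro m n hmn
    induction hmn with
    | refl => exact le_rfl
    | step _ ih => exact Set.sdiff_subset.trans ih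
  have bmono : ∀ m n, n ≤ m → b m ⊆ b n := by
    intro m n hmn
    induction hmn with
    | refl => exact le_rfl
    | step _ ih => exact Set.sdiff_subset.trans ih
  have inv1 : ∀ n x, g.symm^[n] (g^[n] x) = x := fun n =>
    Function.LeftInverse.iterate g.symm_apply_apply n
  have hmeas : ∀ n, ∀ μ ∈ invMeasures g, (μ (a n) : ℝ) - μ (b n) = μ A - μ B := by
    intro n μ hμ
    induction n with
    | zero => rfl
    | succ n ih =>
      have c1 : IsClopen (g^[n] ⁻¹' b n) := (hcl n).2.preimage (g.continuous.iterate n)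
      have c2 : IsClopen (g.symm^[n] ⁻¹' a n) := (hcl n).1.preimage (g.symm.continuous.iterate n)
      have e1 := pm_inter_add μ (a n) c1
      have e2 := pm_inter_add μ (b n) c2
      rw [← ha] at e1
      rw [← hb] at e2
      have e3 := pm_iterate hμ ((hcl n).2.inter c2) n
      have e4 : g^[n] ⁻¹' (b n ∩ g.symm^[n] ⁻¹' a n) = a n ∩ g^[n] ⁻¹' b n := by
        ext x
        simp [inv1, and_comm]
      rw [e4] at e3
      linarith
  let f : X → ℤ := fun x => (if x ∈ B then 1 else 0) - (if x ∈ A then 1 else 0)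
  have hi : ∀ C : Set X, IsClopen C → IsLocallyConstant fun x => if x ∈ C then (1 : ℤ) else 0 :=
    fun C hC => lc_ite (lc_mem hC) (IsLocallyConstant.const 1) (IsLocallyConstant.const 0)
  have hf : IsLocallyConstant f := (hi B hB).comp₂ (hi A hA) (· - ·)
  obtain ⟨N, hN⟩ := exists_birkhoff_pos g hf fun μ hμ => by
    have i1 := integrable_lc (μ := μ) (hi A hA)
    have i2 := integrable_lc (μ := μ) (hi B hB)
    have h := hAB μ hμ
    have h : (μ A : ℝ) < μ B := by exact_mod_cast h
    simp only [f]
    push_cast at i1 i2 ⊢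
    rw [integral_sub i2 i1, integral_indicator_clopen μ hA, integral_indicator_clopen μ hB]
    linarith
  have hemp : a N = ∅ := by
    rw [Set.eq_empty_iff_forall_notMem]
    intro x hx
    -- each visit to `B` in the window was matched at some stage with a point of `A` in the window
    have key : ∀ k : ℕ, k < N → g^[k] x ∈ B →
        ∃ m, m ≤ k ∧ g^[k - m] x ∈ a m ∧ g^[k - m] x ∉ a (m + 1) := by
      intro k hk hkB
      have hkb : g^[k] x ∉ b k := by
        intro h
        have := amono N (k + 1) hk hx
        rw [ha] at this
        exact this.2 h
      have : ∃ m, m < k ∧ g^[k] x ∈ b m ∧ g^[k] x ∉ b (m + 1) := by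
        by_contra! hcon
        have : ∀ m, m ≤ k → g^[k] x ∈ b m := by
          intro m
          induction m with
          | zero => exact fun _ => hkB
          | succ m ih => exact fun hm => hcon m (by omega) (ih (by omega))
        exact hkb (this k le_rfl)
      obtain ⟨m, hm, h1, h2⟩ := this
      have e : g^[k] x = g^[m] (g^[k - m] x) := by
        rw [← Function.iterate_add_apply]
        congr 2
        omega
      have h3 : g^[k - m] x ∈ a m := by
        rw [hb] at h2
        have := not_not.1 fun h => h2 ⟨h1, h⟩
        rw [Set.mem_preimage, e, inv1] at this
        exact this
      refine ⟨m, hm.le, h3, fun h => ?_⟩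
      rw [ha] at h
      refine h.2 ?_
      rw [Set.mem_preimage, ← e]
      exact h1
    choose! m hm h1 h2 using key
    have hcard : ((Finset.range N).filter fun k => g^[k] x ∈ B).card ≤
        ((Finset.range N).filter fun k => g^[k] x ∈ A).card := by
      refine Finset.card_le_card_of_injOn (fun k => k - m k) ?_ ?_
      · intro k hk
        simp only [Finset.coe_filter, Finset.mem_range, Set.mem_ofPred_eq] at hk ⊢
        exact ⟨by omega, amono (m k) 0 (Nat.zero_le _) (h1 k hk.1 hk.2)⟩
      · intro k hk k' hk' hkk
        simp only [Finset.coe_filter, Finset.mem_range, Set.mem_ofPred_eq] at hk hk' hkk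
        have l1 := hm k hk.1 hk.2
        have l2 := hm k' hk'.1 hk'.2
        have p1 := h1 k hk.1 hk.2
        have p2 := h2 k hk.1 hk.2
        have q1 := h1 k' hk'.1 hk'.2
        have q2 := h2 k' hk'.1 hk'.2
        rw [hkk] at p1 p2
        rcases lt_trichotomy (m k) (m k') with h | h | h
        · exact absurd (amono _ _ h q1) p2
        · omega
        · exact absurd (amono _ _ h p1) q2
    have := hN x
    simp only [f, Finset.sum_sub_distrib, Finset.sum_boole] at this
    omega
  refine ⟨B \ b N, hB.diff (hcl N).2, Set.sdiff_subset, fun μ hμ => ?_⟩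
  apply NNReal.coe_injective
  have := hmeas N μ hμ
  rw [hemp] at this
  rw [pm_diff μ (show b N ⊆ B from bmono N 0 (Nat.zero_le _)) (hcl N).2]
  simp only [ProbabilityMeasure.coeFn_empty, NNReal.coe_zero] at this
  linarith

/-- Almost equal division of a clopen set: the visits to `A` along the orbits are counted modulo
`n` until the first visit to `D`, which gives `n` classes such that the measures of
consecutive ones differ by at most `μ D`; `E` is one of them. -/
lemma exists_almost_division {g : X ≃ₜ X} {A D : Set X} (hA : IsClopen A) (hD : IsClopen D)
    (hit : ∀ x, ∃ k, g^[k] x ∈ D) {n : ℕ} (hn : 1 ≤ n) :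
    ∃ E : Set X, IsClopen E ∧ E ⊆ A ∧ ∀ μ ∈ invMeasures g,
      |(n : ℝ) * μ E - μ A| ≤ (n : ℝ) ^ 2 * μ D := by
  classical
  have : NeZero n := ⟨by omega⟩
  obtain ⟨τ, hτ, -, hτ0, hτ1⟩ := exists_hit g.continuous hD hit
  let u : X → ℤ := fun x => if x ∈ A then 1 else 0
  have hu : IsLocallyConstant u :=
    lc_ite (lc_mem hA) (IsLocallyConstant.const 1) (IsLocallyConstant.const 0)
  let c : X → ℤ := fun x => ∑ k ∈ Finset.range (τ x), u (g^[k] x)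
  have hc : IsLocallyConstant c := lc_dep hτ
    (f := fun n x => ∑ k ∈ Finset.range n, u (g^[k] x))
    fun n => lc_sum (fun k => hu.comp_continuous (g.continuous.iterate k)) n
  have cD : ∀ x ∉ D, c x = u x + c (g x) := fun x hx => by
    simp only [c, hτ1 x hx, Finset.sum_range_succ', Function.iterate_succ_apply]
    simp [add_comm]
  let l : X → ZMod n := fun x => (c x : ZMod n)
  have hl : IsLocallyConstant l := hc.comp _
  have lA : ∀ x ∈ A \ D, l x = 1 + l (g x) := fun x hx => by
    simp [l, cD x hx.2, u, hx.1]
  have lA' : ∀ x, x ∉ A → x ∉ D → l x = l (g x) := fun x hx hx' => by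
    simp [l, cD x hx', u, hx]
  let F : ZMod n → Set X := fun i => l ⁻¹' {i}
  have hF : ∀ i, IsClopen (F i) := fun i => isClopen_preimage_of_lc hl _
  let E : ZMod n → Set X := fun i => (A \ D) ∩ F i
  have hE : ∀ i, IsClopen (E i) := fun i => (hA.diff hD).inter (hF i)
  refine ⟨E 0, hE 0, fun x hx => hx.1.1, fun μ hμ => ?_⟩
  have dpos : (0 : ℝ) ≤ μ D := NNReal.coe_nonneg _
  -- consecutive classes: compare `F i` with its preimage under `g`
  have hstep : ∀ i, |(μ (E (i + 1)) : ℝ) - μ (E i)| ≤ μ D := by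
    intro i
    have e0 : (μ (g ⁻¹' F i) : ℝ) = μ (F i) := pm_iterate hμ (hF i) 1
    have hG : IsClopen (g ⁻¹' F i) := (hF i).preimage g.continuous
    have s1 := pm_inter_add μ (F i) hD
    have s2 := pm_inter_add μ (g ⁻¹' F i) hD
    have s3 := pm_inter_add μ (F i \ D) hA
    have s4 := pm_inter_add μ (g ⁻¹' F i \ D) hA
    have m1 := pm_mono μ (Set.inter_subset_right : F i ∩ D ⊆ D)
    have m2 := pm_mono μ (Set.inter_subset_right : g ⁻¹' F i ∩ D ⊆ D)
    have n1 : (0 : ℝ) ≤ μ (F i ∩ D) := NNReal.coe_nonneg _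
    have n2 : (0 : ℝ) ≤ μ (g ⁻¹' F i ∩ D) := NNReal.coe_nonneg _
    have q1 : (F i \ D) ∩ A = E i := by
      ext x; simp only [E, Set.mem_inter_iff, Set.mem_sdiff]; tauto
    have q2 : (g ⁻¹' F i \ D) ∩ A = E (i + 1) := by
      ext x
      constructor
      · rintro ⟨⟨h1, h2⟩, h3⟩
        refine ⟨⟨h3, h2⟩, ?_⟩
        have h1 : l (g x) = i := h1
        change l x = i + 1
        rw [lA x ⟨h3, h2⟩, h1, add_comm]
      · rintro ⟨h1, h2⟩
        refine ⟨⟨?_, h1.2⟩, h1.1⟩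
        have h2 : l x = i + 1 := h2
        change l (g x) = i
        rw [lA x h1, add_comm] at h2
        exact add_right_cancel h2
    have q3 : (g ⁻¹' F i \ D) \ A = (F i \ D) \ A := by
      ext x
      simp only [Set.mem_sdiff, and_congr_left_iff]
      intro h1 h2
      change l (g x) = i ↔ l x = i
      rw [lA' x h1 h2]
    rw [q1] at s3
    rw [q2, q3] at s4
    rw [abs_le]
    constructor <;> linarith
  have hdist : ∀ k : ℕ, |(μ (E (k : ZMod n)) : ℝ) - μ (E 0)| ≤ k * μ D := by
    intro k
    induction k with
    | zero => simp
    | succ k ih =>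
      have := hstep (k : ZMod n)
      push_cast
      have t := abs_sub_le (μ (E ((k : ZMod n) + 1)) : ℝ) (μ (E (k : ZMod n))) (μ (E 0))
      linarith
  have hdist' : ∀ i : ZMod n, |(μ (E i) : ℝ) - μ (E 0)| ≤ (n - 1) * μ D := by
    intro i
    have h1 := hdist i.val
    rw [ZMod.natCast_zmod_val] at h1
    have h2 : ((i.val + 1 : ℕ) : ℝ) ≤ n := by exact_mod_cast ZMod.val_lt i
    push_cast at h2
    refine h1.trans (mul_le_mul_of_nonneg_right (by linarith) dpos)
  have hsum : (μ (A \ D) : ℝ) = ∑ i : ZMod n, (μ (E i) : ℝ) := by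
    have := measureReal_biUnion_finset (μ := (μ : Measure X)) (s := (Finset.univ : Finset (ZMod n)))
      (f := E) (by
        intro i _ j _ hij
        rw [Function.onFun, Set.disjoint_left]
        rintro x ⟨-, h1⟩ ⟨-, h2⟩
        have h1 : l x = i := h1
        have h2 : l x = j := h2
        exact hij (h1.symm.trans h2)) (fun i _ => clopen_meas (hE i))
    simp only [ProbabilityMeasure.measureReal_eq_coe_coeFn] at this
    rw [← this]
    congr 2
    ext x
    simp [E, F]
  have hdiff : |∑ i : ZMod n, (μ (E i) : ℝ) - n * μ (E 0)| ≤ n * ((n - 1) * μ D) := by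
    have e : ∑ i : ZMod n, (μ (E i) : ℝ) - n * μ (E 0) =
        ∑ i : ZMod n, ((μ (E i) : ℝ) - μ (E 0)) := by
      simp [Finset.sum_sub_distrib]
    rw [e]
    refine (Finset.abs_sum_le_sum_abs _ _).trans ?_
    refine (Finset.sum_le_sum fun i _ => hdist' i).trans ?_
    simp
  have a1 := pm_inter_add μ A hD
  have a2 := pm_mono μ (Set.inter_subset_right : A ∩ D ⊆ D)
  have a3 : (0 : ℝ) ≤ μ (A ∩ D) := NNReal.coe_nonneg _
  have a4 : (1 : ℝ) ≤ n := by exact_mod_cast hn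
  rw [← hsum, abs_le] at hdiff
  rw [abs_le]
  constructor <;> nlinarith [mul_nonneg (sub_nonneg.2 a4) dpos]

/-- One of the almost equal classes of `A` overshoots or undershoots by at most `n² μ D`; removing a
copy of a small set `Y`, itself much larger than `D`, makes the error one-sided. -/
theorem approximatelyDivisible_inv [PerfectSpace X] {g : X ≃ₜ X} (hg : IsMinimal g) :
    ApproximatelyDivisible (invMeasures g) := by
  intro A hA n hn ε hε
  have hKc := isCompact_inv g
  have hat : ∀ μ ∈ invMeasures g, Atomless μ := fun μ hμ => atomless_inv hg hμ
  have hpos : ∀ U : Set X, IsClopen U → U.Nonempty → ∀ μ ∈ invMeasures g, (0 : ℝ) < μ U :=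
    fun U hU hne μ hμ => by exact_mod_cast fullSupport_inv hg hμ U hU.isOpen hne
  have hn0 : (0 : ℝ) < n := by exact_mod_cast hn
  rcases A.eq_empty_or_nonempty with rfl | ⟨x, hx⟩
  · exact ⟨∅, isClopen_empty, le_rfl, fun μ _ => by simp [hε.le]⟩
  obtain ⟨δ, hδ, hδA⟩ := exists_pos_lb hKc (continuous_pm hA) (hpos A hA ⟨x, hx⟩)
  obtain ⟨Y, hY, hxY, -, hYs⟩ := exists_small_clopen hKc hat x isOpen_univ trivial
    (ε := min δ ε / (2 * n)) (by positivity)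
  obtain ⟨η, hη, hηY⟩ := exists_pos_lb hKc (continuous_pm hY) (hpos Y hY ⟨x, hxY⟩)
  obtain ⟨D, hD, hxD, -, hDs⟩ := exists_small_clopen hKc hat x isOpen_univ trivial
    (ε := η / (2 * n)) (by positivity)
  obtain ⟨E, hE, hEA, hEd⟩ := exists_almost_division hA hD (hg.hits hD.isOpen ⟨x, hxD⟩) hn
  have est : ∀ μ ∈ invMeasures g, 2 * (n * (μ Y : ℝ)) ≤ δ ∧ 2 * (n * (μ Y : ℝ)) ≤ ε ∧
      (n : ℝ) ^ 2 * μ D ≤ n * μ Y / 2 := by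
    intro μ hμ
    have h1 := (hYs μ hμ).le
    have h2 := (hDs μ hμ).le
    rw [le_div_iff₀ (by positivity)] at h1 h2
    have h3 := hηY μ hμ
    refine ⟨?_, ?_, ?_⟩
    · linarith [min_le_left δ ε]
    · linarith [min_le_right δ ε]
    · nlinarith
  obtain ⟨Z, hZ, hZE, hZY⟩ := good_inv g Y E hY hE fun μ hμ => by
    obtain ⟨h1, -, h3⟩ := est μ hμ
    have h4 := abs_le.1 (hEd μ hμ)
    have h5 := hδA μ hμ
    have h6 := hpos Y hY ⟨x, hxY⟩ μ hμ
    have h7 : (n : ℝ) * μ Y < n * μ E := by nlinarith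
    exact_mod_cast lt_of_mul_lt_mul_left h7 hn0.le
  refine ⟨E \ Z, hE.diff hZ, Set.sdiff_subset.trans hEA, fun μ hμ => ?_⟩
  rw [pm_diff μ hZE hZ, hZY μ hμ]
  obtain ⟨-, h2, h3⟩ := est μ hμ
  have h4 := abs_le.1 (hEd μ hμ)
  have h6 := hpos Y hY ⟨x, hxY⟩ μ hμ
  have h7 : 0 < (n : ℝ) * μ Y := by positivity
  constructor <;> linarith

theorem dynamicalSimplex_inv [PerfectSpace X] {g : X ≃ₜ X} (hg : IsMinimal g)
    (hne : (invMeasures g).Nonempty) : DynamicalSimplex (invMeasures g) :=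
  ⟨hne, isCompact_inv g, probConvex_inv g, fun _ hμ => ⟨atomless_inv hg hμ, fullSupport_inv hg hμ⟩,
    good_inv g, approximatelyDivisible_inv hg⟩

end Forward

end DynSimplex

theorem exists_minimal_homeomorph_iff_dynamicalSimplex
    {X : Type*} [TopologicalSpace X] [CompactSpace X]
    [TopologicalSpace.MetrizableSpace X] [TotallyDisconnectedSpace X] [PerfectSpace X]
    [Nonempty X] [MeasurableSpace X] [BorelSpace X]
    (K : Set (MeasureTheory.ProbabilityMeasure X)) (hK : K.Nonempty) :
    (∃ g : X ≃ₜ X, DynSimplex.IsMinimal g ∧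
        {μ : MeasureTheory.ProbabilityMeasure X | DynSimplex.Preserves g μ} = K) ↔
      DynSimplex.DynamicalSimplex K := by
  constructor
  · rintro ⟨g, hg, rfl⟩
    exact DynSimplex.dynamicalSimplex_inv hg hK
  · exact fun h => h.realise
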